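/- For every integer k ≥ 2 there exist constants c, C > 0 and N such that for every integer n > N, c · n^{1/2}(log n)^{1/2} ≤ f_{C_{2k},K_3}(n) ≤ C · n^{k/(2k−2)}(log n)^{k/(2k−2)}, and the same lower and upper bounds hold for f_{C_{2k−1},K_3}(n). -/

import Mathlib

/-!
The lower and the upper bound are independent of each other and of the parity of the cycle length.

*Lower bound.* An independent set is `C_ℓ`-independent, so it is enough that a triangle-free graph
on `n` vertices has an independent set of order `√(n log n)`. For a uniformly random independent
set `W` and a vertex `v`, conditioning on `W` outside the closed neighbourhood of `v` shows that
`D · 1_{v ∈ W} + |N(v) ∩ W|` has expectation of order `log D` (`fiber_sum_bound`). Summing over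
`v` and using that neighbourhoods are independent yields the bound (`indep_bound`, `exists_indep`).

*Upper bound.* Put `k = j + 1`. The graph is a random graph with edge probability `p` of order
`n ^ (-1/2)` from which a maximal family of edge-disjoint triangles is deleted. With positive
probability (`exists_good_graph`) it has many edges between any two disjoint sets of size `t₀`, and
of size `t₁`, while small sets span few edges to sets that are only a constant times `m` larger. The
probabilistic part is a first-moment computation: each bad event is dominated by an exponential
penalty, and the expected total penalty is less than `1`.

In such a graph a set of `2 t₁` vertices contains a set `T` of large minimum degree, and small
subsets of `T` expand by the factor `5 m` inside `T`. Starting from one vertex, two interleaved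
trees with disjoint levels growing by the factor `m` are built in `T` until both have a level of
size `m ^ j = t₀` (`exists_levels`). An edge between these two levels closes a cycle of length
`2 j + 2 - δ`, where `δ ∈ {0, 1}` decides whether the two trees have the same depth
(`exists_cycle`). As `t₁` is of order `n ^ (k / (2 k - 2)) (log n) ^ (1 / (k - 1))`, both cycle
lengths are obtained from the same graph, and the exponent of the logarithm is no larger than
`k / (2 k - 2)`.
-/

/-- `G` contains a copy of `F` as a (not necessarily induced) subgraph, i.e. there is an
injective graph homomorphism from `F` to `G`. -/
def ContainsCopy {α β : Type*} (F : SimpleGraph α) (G : SimpleGraph β) : Prop :=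
  ∃ f : α → β, Function.Injective f ∧ ∀ ⦃a b : α⦄, F.Adj a b → G.Adj (f a) (f b)

/-- The `F`-independence number of a finite graph `G`: the maximum size of a set `S` of
vertices such that the induced subgraph `G[S]` contains no copy of `F`. -/
noncomputable def fIndepNum {α β : Type*} [Fintype β] (F : SimpleGraph α) (G : SimpleGraph β) :
    ℕ :=
  sSup {k | ∃ S : Finset β, S.card = k ∧ ¬ ContainsCopy F (G.induce (S : Set β))}

/-- `f_{F,H}(n)`: the minimum of the `F`-independence number over all `H`-free graphs on
`n` vertices. -/
noncomputable def minFIndep {α γ : Type*} (F : SimpleGraph α) (H : SimpleGraph γ) (n : ℕ) : ℕ :=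
  sInf {k | ∃ G : SimpleGraph (Fin n), ¬ ContainsCopy H G ∧ fIndepNum F G = k}

/-- The Turán number `ex(n, F)`: the maximum number of edges of an `F`-free graph on `n`
vertices. -/
noncomputable def turanNum (n : ℕ) {α : Type*} (F : SimpleGraph α) : ℕ :=
  sSup {k | ∃ G : SimpleGraph (Fin n), ¬ ContainsCopy F G ∧ k = Nat.card G.edgeSet}

/-! ### Independent sets in triangle-free graphs -/

lemma sum_card_powerset {V : Type*} [DecidableEq V] (Z : Finset V) :
    ∑ Y ∈ Z.powerset, (Y.card : ℝ) = Z.card * 2 ^ Z.card / 2 := by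
  induction Z using Finset.induction_on with
  | empty => simp
  | insert a Z ha ih =>
    have h : ∀ Y ∈ Z.powerset, ((insert a Y).card : ℝ) = Y.card + 1 := by
      intro Y hY
      rw [Finset.card_insert_of_notMem (fun h => ha (Finset.mem_powerset.1 hY h))]
      push_cast; ring
    rw [Finset.sum_powerset_insert ha, Finset.sum_congr rfl h, Finset.sum_add_distrib, ih,
      Finset.card_insert_of_notMem ha]
    simp only [Finset.sum_const, Finset.card_powerset, nsmul_eq_mul]
    push_cast
    ring

/-- The local estimate behind the lower bound. Here `𝓘` is the family of all independent sets.
Group its members `W` according to the part `U` of `W` outside the closed neighbourhood of `v`.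
Since `G` is triangle-free, the group of `U` consists of `U ∪ {v}` and of the `2 ^ x` sets `U ∪ Y`
with `Y ⊆ Z`, where `Z` is the set of the `x` neighbours of `v` without a neighbour in `U`. The
weight `D · 1_{v ∈ W} + |N(v) ∩ W|` thus averages at least `γ` over every group. -/
lemma fiber_sum_bound {V : Type*} [Fintype V] [DecidableEq V] (G : SimpleGraph V)
    [DecidableRel G.Adj] (htri : ∀ a b c, G.Adj a b → G.Adj a c → ¬ G.Adj b c)
    (D γ : ℝ) (hγ : ∀ x : ℕ, γ * (2 ^ x + 1) ≤ D + x * 2 ^ x / 2)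
    (𝓘 : Finset (Finset V))
    (h𝓘 : ∀ W, W ∈ 𝓘 ↔ ∀ a ∈ W, ∀ b ∈ W, ¬ G.Adj a b) (v : V) :
    γ * 𝓘.card ≤
      ∑ W ∈ 𝓘, (D * (if v ∈ W then 1 else 0) + ((G.neighborFinset v ∩ W).card : ℝ)) := by
  have hmaps : ∀ W ∈ 𝓘, W \ insert v (G.neighborFinset v) ∈ 𝓘 := by
    intro W hW
    rw [h𝓘] at hW ⊢
    intro a ha b hb
    exact hW a (Finset.mem_sdiff.1 ha).1 b (Finset.mem_sdiff.1 hb).1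
  have hc : γ * 𝓘.card = ∑ W ∈ 𝓘, γ := by simp [mul_comm]
  rw [hc, ← Finset.sum_fiberwise_of_maps_to hmaps (fun _ => γ),
    ← Finset.sum_fiberwise_of_maps_to hmaps (fun W => D * (if v ∈ W then 1 else 0) +
      ((G.neighborFinset v ∩ W).card : ℝ))]
  refine Finset.sum_le_sum fun U hU => ?_
  -- a set meeting the closed neighbourhood of `v` is the trace of no `W`
  by_cases hUv : Disjoint U (insert v (G.neighborFinset v))
  swap
  · rw [Finset.filter_eq_empty_iff.2]
    · simp
    · intro W _ h
      exact hUv (h ▸ Finset.sdiff_disjoint)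
  have hvU : v ∉ U := fun h => Finset.disjoint_left.1 hUv h (by simp)
  have hNU : ∀ w, G.Adj v w → w ∉ U := fun w hw h =>
    Finset.disjoint_left.1 hUv h (by simp [hw])
  rw [h𝓘] at hU
  set Z := (G.neighborFinset v).filter (fun w => ∀ u ∈ U, ¬ G.Adj w u) with hZ
  have hZ' : ∀ w, w ∈ Z ↔ G.Adj v w ∧ ∀ u ∈ U, ¬ G.Adj w u := by
    intro w; simp [hZ]
  have hfib : 𝓘.filter (fun W => W \ insert v (G.neighborFinset v) = U) =
      insert (insert v U) (Z.powerset.image (fun Y => U ∪ Y)) := by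
    ext W
    simp only [Finset.mem_filter, Finset.mem_insert, Finset.mem_image, Finset.mem_powerset]
    constructor
    · rintro ⟨hW, hWU⟩
      rw [h𝓘] at hW
      have hUW : U ⊆ W := hWU ▸ Finset.sdiff_subset
      have hmem : ∀ w ∈ W, w ∈ U ∨ w = v ∨ G.Adj v w := by
        intro w hw
        by_contra! hcon
        apply hcon.1
        rw [← hWU]
        simp [hw, hcon.2.1, hcon.2.2]
      by_cases hv : v ∈ W
      · left
        ext w
        rw [Finset.mem_insert]
        constructor
        · intro hw
          rcases hmem w hw with h | h | h
          · exact Or.inr h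
          · exact Or.inl h
          · exact absurd h (hW v hv w hw)
        · rintro (rfl | h)
          · exact hv
          · exact hUW h
      · right
        refine ⟨W \ U, ?_, ?_⟩
        · intro w hw
          rw [Finset.mem_sdiff] at hw
          rw [hZ']
          rcases hmem w hw.1 with h | h | h
          · exact absurd h hw.2
          · exact absurd (h ▸ hw.1) hv
          · exact ⟨h, fun u hu => hW w hw.1 u (hUW hu)⟩
        · rw [Finset.union_sdiff_of_subset hUW]
    · rintro (rfl | ⟨Y, hY, rfl⟩)
      · refine ⟨?_, ?_⟩
        · rw [h𝓘]
          intro a ha b hb hab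
          rcases Finset.mem_insert.1 ha with ha' | ha <;>
            rcases Finset.mem_insert.1 hb with hb' | hb
          · exact G.loopless.irrefl _ (ha' ▸ hb' ▸ hab)
          · exact hNU _ (ha' ▸ hab) hb
          · exact hNU _ (hb' ▸ hab.symm) ha
          · exact hU a ha b hb hab
        · ext w
          simp only [Finset.mem_sdiff, Finset.mem_insert, SimpleGraph.mem_neighborFinset]
          constructor
          · rintro ⟨h | h, h2⟩
            · exact absurd (Or.inl h) h2
            · exact h
          · intro h
            refine ⟨Or.inr h, ?_⟩
            rintro (rfl | h2)
            · exact hvU h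
            · exact hNU _ h2 h
      · refine ⟨?_, ?_⟩
        · rw [h𝓘]
          intro a ha b hb hab
          rcases Finset.mem_union.1 ha with ha | ha <;>
            rcases Finset.mem_union.1 hb with hb | hb
          · exact hU a ha b hb hab
          · exact ((hZ' b).1 (hY hb)).2 a ha hab.symm
          · exact ((hZ' a).1 (hY ha)).2 b hb hab
          · exact htri v a b ((hZ' a).1 (hY ha)).1 ((hZ' b).1 (hY hb)).1 hab
        · ext w
          simp only [Finset.mem_sdiff, Finset.mem_insert, SimpleGraph.mem_neighborFinset,
            Finset.mem_union]
          constructor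
          · rintro ⟨h | h, h2⟩
            · exact h
            · exact absurd (Or.inr ((hZ' w).1 (hY h)).1) h2
          · intro h
            refine ⟨Or.inl h, ?_⟩
            rintro (rfl | h2)
            · exact hvU h
            · exact hNU _ h2 h
  have hvZ : v ∉ Z := fun h => G.loopless.irrefl _ ((hZ' v).1 h).1
  have hnot : insert v U ∉ Z.powerset.image (fun Y => U ∪ Y) := by
    simp only [Finset.mem_image, Finset.mem_powerset, not_exists, not_and]
    intro Y hY h
    have : v ∈ U ∪ Y := h ▸ Finset.mem_insert_self _ _
    rcases Finset.mem_union.1 this with h | h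
    · exact hvU h
    · exact hvZ (hY h)
  have hinj : Set.InjOn (fun Y => U ∪ Y) (Z.powerset : Set (Finset V)) := by
    intro Y hY Y' hY' h
    have hd : ∀ Y, Y ⊆ Z → (U ∪ Y) \ U = Y := by
      intro Y hY
      rw [Finset.union_sdiff_left, Finset.sdiff_eq_self_iff_disjoint]
      rw [Finset.disjoint_left]
      intro w hw hwU
      exact hNU w ((hZ' w).1 (hY hw)).1 hwU
    simp only [Finset.coe_powerset, Set.mem_preimage, Set.mem_powerset_iff,
      Finset.coe_subset] at hY hY'
    have h' : U ∪ Y = U ∪ Y' := h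
    rw [← hd Y hY, ← hd Y' hY', h']
  rw [hfib, Finset.sum_insert hnot, Finset.sum_insert hnot, Finset.sum_image hinj,
    Finset.sum_image hinj]
  have h1 : ∑ Y ∈ Z.powerset, (D * (if v ∈ U ∪ Y then 1 else 0) +
      ((G.neighborFinset v ∩ (U ∪ Y)).card : ℝ)) = ∑ Y ∈ Z.powerset, (Y.card : ℝ) := by
    refine Finset.sum_congr rfl fun Y hY => ?_
    rw [Finset.mem_powerset] at hY
    have a1 : v ∉ U ∪ Y := by
      rw [Finset.mem_union]; rintro (h | h)
      · exact hvU h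
      · exact hvZ (hY h)
    have a2 : G.neighborFinset v ∩ (U ∪ Y) = Y := by
      ext w
      simp only [Finset.mem_inter, SimpleGraph.mem_neighborFinset, Finset.mem_union]
      constructor
      · rintro ⟨h, h' | h'⟩
        · exact absurd h' (hNU w h)
        · exact h'
      · intro h
        exact ⟨((hZ' w).1 (hY h)).1, Or.inr h⟩
    rw [a2]; simp [a1]
  have h2 := sum_card_powerset Z
  rw [h1, h2]
  have := hγ Z.card
  simp only [Finset.sum_const, Finset.card_powerset, Finset.mem_insert_self, if_true]
  have hpos : (0 : ℝ) ≤ (G.neighborFinset v ∩ insert v U).card := by positivity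
  rw [nsmul_eq_mul]
  push_cast
  linarith

/-- Double counting of `D · 1_{v ∈ W} + |N(v) ∩ W|` over vertices `v` and independent sets `W`:
if independent sets have size at most `a ≤ D`, then neighbourhoods, which are independent, have
size at most `D`, so each `W` contributes at most `2 D a`, while each `v` contributes on average at
least `γ` by `fiber_sum_bound`. -/
lemma indep_bound {V : Type*} [Fintype V] (G : SimpleGraph V)
    (htri : ∀ a b c, G.Adj a b → G.Adj a c → ¬ G.Adj b c)
    (D γ a : ℝ) (hγ : ∀ x : ℕ, γ * (2 ^ x + 1) ≤ D + x * 2 ^ x / 2)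
    (hD0 : 0 ≤ D)
    (ha : ∀ W : Finset V, (∀ a ∈ W, ∀ b ∈ W, ¬ G.Adj a b) → (W.card : ℝ) ≤ a) (haD : a ≤ D) :
    γ * Fintype.card V ≤ 2 * D * a := by
  classical
  set 𝓘 : Finset (Finset V) :=
    Finset.univ.filter (fun W => ∀ a ∈ W, ∀ b ∈ W, ¬ G.Adj a b) with h
  have h𝓘 : ∀ W, W ∈ 𝓘 ↔ ∀ a ∈ W, ∀ b ∈ W, ¬ G.Adj a b := by intro W; simp [h]
  have hdeg : ∀ v, ((G.neighborFinset v).card : ℝ) ≤ D := by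
    intro v
    refine (ha _ ?_).trans haD
    intro x hx y hy
    rw [SimpleGraph.mem_neighborFinset] at hx hy
    exact htri v x y hx hy
  have h1 : ∑ v : V, γ * 𝓘.card ≤ ∑ v : V, ∑ W ∈ 𝓘, (D * (if v ∈ W then 1 else 0) +
      ((G.neighborFinset v ∩ W).card : ℝ)) :=
    Finset.sum_le_sum fun v _ => fiber_sum_bound G htri D γ hγ 𝓘 h𝓘 v
  rw [Finset.sum_comm] at h1
  have h2 : ∀ W ∈ 𝓘, ∑ v : V, (D * (if v ∈ W then 1 else 0) +
      ((G.neighborFinset v ∩ W).card : ℝ)) ≤ 2 * D * a := by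
    intro W hW
    have hWa := ha W ((h𝓘 W).1 hW)
    rw [Finset.sum_add_distrib, ← Finset.mul_sum]
    have e1 : ∑ v : V, (if v ∈ W then (1 : ℝ) else 0) = W.card := by simp
    have e2 : ∑ v : V, ((G.neighborFinset v ∩ W).card : ℝ) =
        ∑ w ∈ W, ((G.neighborFinset w).card : ℝ) := by
      have : ∀ v : V, ((G.neighborFinset v ∩ W).card : ℝ) =
          ∑ w ∈ W, if G.Adj v w then 1 else 0 := by
        intro v
        rw [Finset.sum_boole]
        congr 2
        ext w
        simp [and_comm]
      simp_rw [this]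
      rw [Finset.sum_comm]
      refine Finset.sum_congr rfl fun w _ => ?_
      rw [Finset.sum_boole]
      congr 2
      ext u
      simp [G.adj_comm]
    have e3 : ∑ w ∈ W, ((G.neighborFinset w).card : ℝ) ≤ W.card * D := by
      rw [← nsmul_eq_mul]
      exact Finset.sum_le_card_nsmul _ _ _ fun w _ => hdeg w
    rw [e1, e2]
    nlinarith
  have h3 := h1.trans (Finset.sum_le_card_nsmul _ _ _ h2)
  have hpos : (0 : ℝ) < 𝓘.card := by
    have : (∅ : Finset V) ∈ 𝓘 := by rw [h𝓘]; simp
    exact_mod_cast Finset.card_pos.2 ⟨_, this⟩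
  simp only [Finset.sum_const, nsmul_eq_mul, Finset.card_univ] at h3
  refine le_of_mul_le_mul_right ?_ hpos
  linarith

/-- The averaging hypothesis of `indep_bound` holds with `γ = log D / 8`: if `2 ^ x ≤ √D` the
term `D` dominates, and otherwise `x ≥ log √D`. -/
lemma gamma_ineq (D : ℝ) (hD : 16 ≤ D) (x : ℕ) :
    Real.log D / 8 * (2 ^ x + 1) ≤ D + x * 2 ^ x / 2 := by
  have hD0 : 0 < D := by linarith
  have hsq : Real.sqrt D * Real.sqrt D = D := Real.mul_self_sqrt hD0.le
  have hs4 : 4 ≤ Real.sqrt D := Real.le_sqrt_of_sq_le (by norm_num; linarith)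
  have hlog : Real.log D = 2 * Real.log (Real.sqrt D) := by
    rw [Real.log_sqrt hD0.le]; ring
  have hl1 : Real.log (Real.sqrt D) ≤ Real.sqrt D := by
    have := Real.log_le_sub_one_of_pos (show 0 < Real.sqrt D by linarith)
    linarith
  have hl0 : 0 ≤ Real.log (Real.sqrt D) := Real.log_nonneg (by linarith)
  have h1 : (1 : ℝ) ≤ 2 ^ x := one_le_pow₀ (by norm_num)
  have hx0 : (0 : ℝ) ≤ x := by positivity
  rcases le_total ((2 : ℝ) ^ x) (Real.sqrt D) with h | h
  · have : 0 ≤ (x : ℝ) * 2 ^ x / 2 := by positivity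
    rw [hlog]
    nlinarith [mul_le_mul hl1 h (by linarith) (by linarith)]
  · have hlx : Real.log (Real.sqrt D) ≤ x := by
      calc Real.log (Real.sqrt D) ≤ Real.log (2 ^ x) := Real.log_le_log (by linarith) h
        _ = x * Real.log 2 := Real.log_pow _ _
        _ ≤ x * 1 := by gcongr; linarith [Real.log_two_lt_d9]
        _ = x := mul_one _
    rw [hlog]
    nlinarith [mul_le_mul_of_nonneg_right hlx (show (0 : ℝ) ≤ 2 ^ x by positivity)]

/-- A triangle-free graph on `n` vertices has an independent set of order `√(n log n)`. -/
lemma exists_indep (n : ℕ) (hn : 1000 ≤ n) (G : SimpleGraph (Fin n))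
    (htri : ∀ a b c, G.Adj a b → G.Adj a c → ¬ G.Adj b c) :
    ∃ W : Finset (Fin n), (∀ a ∈ W, ∀ b ∈ W, ¬ G.Adj a b) ∧
      1 / 64 * (n : ℝ) ^ ((1 : ℝ) / 2) * Real.log n ^ ((1 : ℝ) / 2) ≤ W.card := by
  by_contra! hcon
  rw [← Real.sqrt_eq_rpow, ← Real.sqrt_eq_rpow] at hcon
  have hn' : (1000 : ℝ) ≤ n := by exact_mod_cast hn
  have hL : 1 ≤ Real.log n := by
    rw [Real.le_log_iff_exp_le (by linarith)]
    linarith [Real.exp_one_lt_d9]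
  set s := Real.sqrt n with hs
  set l := Real.sqrt (Real.log n) with hl
  have hss : s * s = n := Real.mul_self_sqrt (by linarith)
  have hll : l * l = Real.log n := Real.mul_self_sqrt (by linarith)
  have hs1 : 16 ≤ s := Real.le_sqrt_of_sq_le (by norm_num; linarith)
  have hl1 : 1 ≤ l := Real.le_sqrt_of_sq_le (by norm_num; linarith)
  have hD : 16 ≤ s * l := by nlinarith
  have key := indep_bound G htri (s * l) (Real.log (s * l) / 8) (1 / 64 * s * l)
    (gamma_ineq _ hD) (by linarith) (fun W hW => (hcon W hW).le) (by nlinarith)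
  have hlog : l * l / 2 ≤ Real.log (s * l) := by
    rw [hll]
    have : Real.log n / 2 = Real.log s := by rw [hs, Real.log_sqrt (by linarith)]
    rw [this]
    exact Real.log_le_log (by linarith) (by nlinarith)
  rw [Fintype.card_fin, ← hss] at key
  have h5 : l * l / 2 / 8 * (s * s) ≤ Real.log (s * l) / 8 * (s * s) := by gcongr
  have : 0 < (l * l) * (s * s) := by positivity
  nlinarith

/-! ### Cycles from expansion -/

/-- Every exponent is attained by at most two indices, so the sum of the level sizes is dominated
by a geometric series. -/
lemma sum_pow_half_le (m δ : ℕ) (hm : 2 ≤ m) (hδ : δ ≤ 1) (r : ℕ) :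
    ∑ i ∈ Finset.range (r + 1), m ^ ((i + δ) / 2) ≤ 4 * m ^ ((r + δ) / 2) := by
  induction r using Nat.twoStepInduction with
  | zero =>
    have : δ / 2 = 0 := by omega
    simp [this]
  | one =>
    have h1 : δ / 2 = 0 := by omega
    have : 1 ≤ m ^ ((1 + δ) / 2) := Nat.one_le_pow _ _ (by omega)
    simp only [Finset.sum_range_succ, Finset.range_zero, Finset.sum_empty, Nat.zero_add, h1,
      pow_zero]
    omega
  | more r ih _ =>
    rw [Finset.sum_range_succ, Finset.sum_range_succ]
    have h1 : (r + 2 + δ) / 2 = (r + δ) / 2 + 1 := by omega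
    have h2 : m ^ ((r + 1 + δ) / 2) ≤ m ^ ((r + δ) / 2 + 1) :=
      Nat.pow_le_pow_right (by omega) (by omega)
    rw [h1]
    have h3 : 2 * m ^ ((r + δ) / 2) ≤ m ^ ((r + δ) / 2 + 1) := by
      rw [pow_succ, mul_comm]; gcongr
    omega

/-- Growing levels in an expanding vertex set `T`. The levels are disjoint, `Q r` has
`m ^ ⌊(r + δ) / 2⌋` vertices, and every vertex of `Q (r + 1)` has a neighbour in `Q (r - 1)`.
Because of truncated subtraction, `Q 1` is attached to `Q 0`; so two interleaved trees grow out of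
the single vertex of `Q 0`, one through the even levels and one through the odd levels. -/
lemma exists_levels {V : Type*} [DecidableEq V] (G : SimpleGraph V) (T : Finset V) (m j δ : ℕ)
    (hm : 2 ≤ m) (hδ : δ ≤ 1) (hT : T.Nonempty)
    (hexp : ∀ X ⊆ T, X.Nonempty → X.card ≤ m ^ (j - 1) → ∀ Y : Finset V,
      Y.card ≤ 5 * m * X.card → ∃ x ∈ X, ∃ z ∈ T, G.Adj x z ∧ z ∉ Y)
    (R : ℕ) (hR : (R + δ) / 2 ≤ j) (hj : 1 ≤ j) :
    ∃ Q : ℕ → Finset V, (∀ r ≤ R, Q r ⊆ T ∧ (Q r).card = m ^ ((r + δ) / 2)) ∧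
      (∀ r ≤ R, ∀ i < r, Disjoint (Q i) (Q r)) ∧
      (∀ r < R, ∀ y ∈ Q (r + 1), ∃ x ∈ Q (r - 1), G.Adj x y) := by
  classical
  induction R with
  | zero =>
    obtain ⟨u, hu⟩ := hT
    refine ⟨fun _ => {u}, ?_, ?_, ?_⟩
    · intro r hr
      have : (r + δ) / 2 = 0 := by omega
      rw [this]
      simp [hu]
    · intro r hr i hi; omega
    · intro r hr; omega
  | succ R ih =>
    obtain ⟨Q, hQ1, hQ2, hQ3⟩ := ih (by omega)
    -- the new level is found among the neighbours of level `R - 1`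
    set X := Q (R - 1) with hX
    obtain ⟨hXT, hXc⟩ := hQ1 (R - 1) (by omega)
    rw [← hX] at hXT hXc
    set W := (Finset.range (R + 1)).biUnion Q with hW
    have hWc : W.card ≤ 4 * m * X.card := by
      refine (Finset.card_biUnion_le).trans ?_
      rw [Finset.sum_congr rfl fun i hi => (hQ1 i (by have := Finset.mem_range.1 hi; omega)).2]
      refine (sum_pow_half_le m δ hm hδ R).trans ?_
      rw [hXc, mul_assoc, ← pow_succ']
      exact Nat.mul_le_mul_left _ (Nat.pow_le_pow_right (by omega) (by omega))
    set M := T.filter (fun z => z ∉ W ∧ ∃ x ∈ X, G.Adj x z) with hM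
    have hMc : m * X.card ≤ M.card := by
      by_contra! hlt
      have hXne : X.Nonempty := by
        rw [← Finset.card_pos, hXc]; exact Nat.pow_pos (by omega)
      obtain ⟨x, hx, z, hz, hxz, hzY⟩ := hexp X hXT hXne
        (hXc ▸ Nat.pow_le_pow_right (by omega) (by omega)) (W ∪ M)
        ((Finset.card_union_le _ _).trans (by
          have : 5 * m * X.card = 4 * m * X.card + m * X.card := by ring
          omega))
      apply hzY
      by_cases hzW : z ∈ W
      · exact Finset.mem_union_left _ hzW
      · exact Finset.mem_union_right _ (Finset.mem_filter.2 ⟨hz, hzW, x, hx, hxz⟩)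
    have hle : m ^ ((R + 1 + δ) / 2) ≤ M.card := by
      refine le_trans ?_ hMc
      rw [hXc, ← pow_succ']
      exact Nat.pow_le_pow_right (by omega) (by omega)
    obtain ⟨N, hNM, hNc⟩ := Finset.exists_subset_card_eq hle
    have hQne : ∀ r ≤ R, Function.update Q (R + 1) N r = Q r := by
      intro r hr
      rw [Function.update_of_ne (by omega)]
    have hN : ∀ z ∈ N, z ∈ T ∧ z ∉ W ∧ ∃ x ∈ X, G.Adj x z := fun z hz =>
      Finset.mem_filter.1 (hNM hz)
    refine ⟨Function.update Q (R + 1) N, ?_, ?_, ?_⟩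
    · intro r hr
      rcases Nat.lt_or_eq_of_le hr with h | rfl
      · rw [hQne r (by omega)]; exact hQ1 r (by omega)
      · rw [Function.update_self]
        exact ⟨fun z hz => (hN z hz).1, hNc⟩
    · intro r hr i hi
      rw [hQne i (by omega)]
      rcases Nat.lt_or_eq_of_le hr with h | rfl
      · rw [hQne r (by omega)]; exact hQ2 r (by omega) i hi
      · rw [Function.update_self, Finset.disjoint_left]
        intro z hz hzN
        exact (hN z hzN).2.1 (Finset.mem_biUnion.2 ⟨i, Finset.mem_range.2 hi, hz⟩)
    · intro r hr y hy
      rw [hQne (r - 1) (by omega)]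
      rcases Nat.lt_or_eq_of_le (Nat.lt_succ_iff.1 hr) with h | rfl
      · rw [hQne (r + 1) (by omega)] at hy
        exact hQ3 r h y hy
      · rw [Function.update_self] at hy
        exact (hN y hy).2.2

/-- Tracing a vertex `a` of `Q r` and a vertex `b` of `Q (r + 1)` back to the root selects one
vertex `x i` in every level `i ≤ r + 1`. -/
lemma exists_trace {V : Type*} (G : SimpleGraph V) (Q : ℕ → Finset V)
    (h0 : (Q 0).card = 1) (r : ℕ)
    (hQ : ∀ i ≤ r, ∀ y ∈ Q (i + 1), ∃ x ∈ Q (i - 1), G.Adj x y) :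
    ∀ a ∈ Q r, ∀ b ∈ Q (r + 1), ∃ x : ℕ → V, x r = a ∧ x (r + 1) = b ∧
      (∀ i ≤ r + 1, x i ∈ Q i) ∧ ∀ i ≤ r, G.Adj (x (i - 1)) (x (i + 1)) := by
  induction r with
  | zero =>
    intro a ha b hb
    obtain ⟨u, hu⟩ := Finset.card_eq_one.1 h0
    obtain ⟨c, hc, hcb⟩ := hQ 0 le_rfl b hb
    simp only [Nat.zero_sub, hu, Finset.mem_singleton] at hc ha
    subst hc ha
    refine ⟨fun i => if i = 0 then a else b, by simp, by simp, ?_, ?_⟩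
    · intro i hi
      have : i = 0 ∨ i = 1 := by omega
      rcases this with rfl | rfl
      · simp [hu]
      · simpa using hb
    · intro i hi
      have : i = 0 := by omega
      subst this
      simpa using hcb
  | succ r ih =>
    intro a ha b hb
    obtain ⟨c, hc, hcb⟩ := hQ (r + 1) le_rfl b hb
    obtain ⟨x, hx1, hx2, hx3, hx4⟩ := ih (fun i hi => hQ i (by omega)) c hc a ha
    have hu : ∀ i ≤ r + 1, Function.update x (r + 2) b i = x i := by
      intro i hi; rw [Function.update_of_ne (by omega)]
    refine ⟨Function.update x (r + 2) b, ?_, ?_, ?_, ?_⟩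
    · rw [hu _ le_rfl, hx2]
    · simp
    · intro i hi
      rcases Nat.lt_or_eq_of_le hi with h | rfl
      · rw [hu i (by omega)]; exact hx3 i (by omega)
      · rw [Function.update_self]; exact hb
    · intro i hi
      rw [hu (i - 1) (by omega)]
      rcases Nat.lt_or_eq_of_le hi with h | rfl
      · rw [hu (i + 1) (by omega)]; exact hx4 i (by omega)
      · rw [Function.update_self]
        simpa [hx1] using hcb

/-- Expansion of small sets, together with an edge between any two disjoint sets of size `m ^ j`,
produces a cycle of length `2 j + 2 - δ`. The last two levels have size `m ^ j`; the edge between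
them joins the two paths traced back to the root, and the cycle runs through the vertices `x i` with
`i` even in increasing order and then through those with `i` odd in decreasing order. -/
lemma exists_cycle {V : Type*} [DecidableEq V] (G : SimpleGraph V) (T : Finset V) (m j δ : ℕ)
    (hm : 2 ≤ m) (hδ : δ ≤ 1) (hT : T.Nonempty)
    (hexp : ∀ X ⊆ T, X.Nonempty → X.card ≤ m ^ (j - 1) → ∀ Y : Finset V,
      Y.card ≤ 5 * m * X.card → ∃ x ∈ X, ∃ z ∈ T, G.Adj x z ∧ z ∉ Y)
    (hj : 1 ≤ j)
    (hedge : ∀ A B : Finset V, Disjoint A B → A.card = m ^ j → B.card = m ^ j →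
      ∃ a ∈ A, ∃ b ∈ B, G.Adj a b) :
    ∃ f : Fin (2 * j + 2 - δ) → V, Function.Injective f ∧ (∀ i, f i ∈ T) ∧
      ∀ a b, (SimpleGraph.cycleGraph (2 * j + 2 - δ)).Adj a b → G.Adj (f a) (f b) := by
  set R := 2 * j + 1 - δ with hRdef
  obtain ⟨Q, hQ1, hQ2, hQ3⟩ := exists_levels G T m j δ hm hδ hT hexp R (by omega) hj
  have hc1 := (hQ1 (R - 1) (by omega)).2
  have hc2 := (hQ1 R le_rfl).2
  have hc0 := (hQ1 0 (by omega)).2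
  rw [show (R - 1 + δ) / 2 = j by omega] at hc1
  rw [show (R + δ) / 2 = j by omega] at hc2
  rw [show (0 + δ) / 2 = 0 by omega, pow_zero] at hc0
  obtain ⟨a, ha, b, hb, hab⟩ := hedge _ _ (hQ2 R le_rfl (R - 1) (by omega)) hc1 hc2
  obtain ⟨x, hx1, hx2, hx3, hx4⟩ := exists_trace G Q hc0 (R - 1)
    (fun i hi => hQ3 i (by omega)) a ha b (by rwa [show R - 1 + 1 = R by omega])
  rw [show R - 1 + 1 = R by omega] at hx2 hx3
  have hinj : ∀ i i', i ≤ R → i' ≤ R → x i = x i' → i = i' := by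
    intro i i' hi hi' h
    rcases Nat.lt_trichotomy i i' with hlt | heq | hlt
    · exact absurd (h ▸ hx3 i hi) (fun h' =>
        Finset.disjoint_left.1 (hQ2 i' hi' i hlt) h' (hx3 i' hi'))
    · exact heq
    · exact absurd (h ▸ hx3 i hi) (fun h' =>
        Finset.disjoint_left.1 (hQ2 i hi i' hlt) (hx3 i' hi') (h ▸ hx3 i hi))
  have hadj2 : ∀ i, i + 2 ≤ R → G.Adj (x i) (x (i + 2)) := by
    intro i hi
    have := hx4 (i + 1) (by omega)
    simpa using this
  have hadj01 : G.Adj (x 0) (x 1) := by simpa using hx4 0 (by omega)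
  have hadjR : ∀ i, i + 1 = R → G.Adj (x i) (x (i + 1)) := by
    intro i hi
    have : i = R - 1 := by omega
    subst this
    rw [hi, hx1, hx2]; exact hab
  -- the even indices upwards, then the odd indices downwards
  let φ : ℕ → ℕ := fun p => if 2 * p ≤ R then 2 * p else 2 * (R - p) + 1
  have hφR : ∀ p ≤ R, φ p ≤ R := by
    intro p hp; simp only [φ]; split_ifs <;> omega
  have hstep : ∀ p, p + 1 ≤ R → G.Adj (x (φ p)) (x (φ (p + 1))) := by
    intro p hp
    simp only [φ]
    split_ifs with h1 h2 h2
    · exact hadj2 (2 * p) (by omega)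
    · by_cases h : 2 * p = R
      · have h3 := (hadjR (2 * (R - (p + 1)) + 1) (by omega)).symm
        rwa [show 2 * (R - (p + 1)) + 1 + 1 = 2 * p by omega] at h3
      · have h3 := hadjR (2 * p) (by omega)
        rwa [show 2 * p + 1 = 2 * (R - (p + 1)) + 1 by omega] at h3
    · omega
    · have h3 := (hadj2 (2 * (R - (p + 1)) + 1) (by omega)).symm
      rwa [show 2 * (R - (p + 1)) + 1 + 2 = 2 * (R - p) + 1 by omega] at h3
  have hlast : G.Adj (x (φ R)) (x (φ 0)) := by
    have e1 : φ R = 1 := by simp only [φ]; split_ifs <;> omega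
    have e2 : φ 0 = 0 := by simp [φ]
    rw [e1, e2]; exact hadj01.symm
  have hsub : ∀ a b : Fin (2 * j + 2 - δ), (a - b).val = 1 → G.Adj (x (φ b)) (x (φ a)) := by
    intro a b h
    have hval : a.val = b.val + 1 ∨ (b.val = R ∧ a.val = 0) := by
      rw [Fin.sub_def] at h
      simp only at h
      have ha := a.isLt
      have hb := b.isLt
      rcases le_or_gt b.val a.val with hle | hlt
      · left
        rw [show 2 * j + 2 - δ - b.val + a.val = (a.val - b.val) + (2 * j + 2 - δ) by omega,
          Nat.add_mod_right, Nat.mod_eq_of_lt (by omega)] at h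
        omega
      · right
        rw [Nat.mod_eq_of_lt (by omega)] at h
        omega
    have ha := a.isLt
    rcases hval with h | ⟨h1, h2⟩
    · rw [h]; exact hstep _ (by omega)
    · rw [h1, h2]; exact hlast
  refine ⟨fun i => x (φ i), ?_, ?_, ?_⟩
  · intro i i' h
    have hi := i.isLt
    have hi' := i'.isLt
    have := hinj _ _ (hφR i (by omega)) (hφR i' (by omega)) h
    simp only [φ] at this
    apply Fin.ext
    split_ifs at this <;> omega
  · intro i
    have hi := i.isLt
    have h := hφR i (by omega)
    exact (hQ1 _ h).1 (hx3 _ h)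
  · intro a b h
    rw [SimpleGraph.cycleGraph_adj'] at h
    rcases h with h | h
    · exact (hsub a b h).symm
    · exact hsub b a h

/-- A bipartite graph with more than `d` edges per vertex has a nonempty vertex set inducing
minimum degree at least `d`: one maximising the number of edges minus `d` times the number of
vertices. -/
lemma exists_min_degree {V : Type*} [DecidableEq V] (G : SimpleGraph V) [DecidableRel G.Adj]
    (X Y : Finset V) (hXY : Disjoint X Y) (d : ℕ)
    (h : d * (X ∪ Y).card < ((X ×ˢ Y).filter (fun e => G.Adj e.1 e.2)).card) :
    ∃ T ⊆ X ∪ Y, T.Nonempty ∧ ∀ v ∈ T, d ≤ (T.filter (G.Adj v)).card := by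
  let E : Finset V → Finset (V × V) := fun T =>
    ((X ×ˢ Y).filter (fun e => G.Adj e.1 e.2)).filter (fun e => e.1 ∈ T ∧ e.2 ∈ T)
  let Φ : Finset V → ℤ := fun T => ((E T).card : ℤ) - d * T.card
  obtain ⟨T, hT, hmax⟩ := Finset.exists_max_image (X ∪ Y).powerset Φ ⟨_, Finset.mem_powerset_self _⟩
  rw [Finset.mem_powerset] at hT
  refine ⟨T, hT, ?_, ?_⟩
  · rw [Finset.nonempty_iff_ne_empty]
    rintro rfl
    have h1 := hmax (X ∪ Y) (Finset.mem_powerset_self _)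
    have h2 : E (X ∪ Y) = (X ×ˢ Y).filter (fun e => G.Adj e.1 e.2) := by
      refine Finset.filter_true_of_mem fun e he => ?_
      have := Finset.mem_product.1 (Finset.mem_filter.1 he).1
      exact ⟨Finset.mem_union_left _ this.1, Finset.mem_union_right _ this.2⟩
    have h3 : E ∅ = ∅ := by simp [E]
    simp only [Φ, h2, h3, Finset.card_empty] at h1
    push_cast at h1
    have h4 : ((d * (X ∪ Y).card : ℕ) : ℤ) < _ := Int.ofNat_lt.2 h
    push_cast at h4
    linarith
  · intro v hv
    have h1 := hmax (T.erase v) (Finset.mem_powerset.2 ((Finset.erase_subset _ _).trans hT))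
    have h2 : (E T).card ≤ (E (T.erase v)).card + (T.filter (G.Adj v)).card := by
      have hinj : ((E T).filter (fun e => e.1 = v ∨ e.2 = v)).card ≤
          (T.filter (G.Adj v)).card := by
        refine Finset.card_le_card_of_injOn (fun e => if e.1 = v then e.2 else e.1) ?_ ?_
        · intro e he
          simp only [E, Finset.coe_filter, Finset.mem_filter, Finset.mem_product,
            Set.mem_ofPred_eq] at he ⊢
          obtain ⟨⟨⟨_, hadj⟩, hm1, hm2⟩, hor⟩ := he
          split_ifs with hif
          · exact ⟨hm2, hif ▸ hadj⟩
          · rcases hor with h | h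
            · exact absurd h hif
            · exact ⟨hm1, h ▸ hadj.symm⟩
        · intro e he e' he' hee
          simp only [E, Finset.coe_filter, Finset.mem_filter, Finset.mem_product,
            Set.mem_ofPred_eq] at he he' hee
          obtain ⟨⟨⟨⟨hx, hy⟩, hadj⟩, hm1, hm2⟩, hor⟩ := he
          obtain ⟨⟨⟨⟨hx', hy'⟩, hadj'⟩, hm1', hm2'⟩, hor'⟩ := he'
          have hd : ∀ z ∈ X, z ∉ Y := fun z hz => Finset.disjoint_left.1 hXY hz
          rcases e with ⟨p, q⟩
          rcases e' with ⟨p', q'⟩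
          simp only at *
          split_ifs at hee with h1 h2 h2
          · rw [h1, h2, hee]
          · exact absurd hy (hee ▸ hd _ hx')
          · exact absurd hy' (hee ▸ hd _ hx)
          · have e1 := hor.resolve_left h1
            have e2 := hor'.resolve_left h2
            rw [hee, e1, e2]
      have hsplit : E (T.erase v) = (E T).filter (fun e => ¬ (e.1 = v ∨ e.2 = v)) := by
        ext e
        simp only [E, Finset.mem_filter, Finset.mem_erase]
        tauto
      rw [← Finset.card_filter_add_card_filter_not (fun e : V × V => e.1 = v ∨ e.2 = v), hsplit]
      omega
    simp only [Φ] at h1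
    rw [Finset.card_erase_of_mem hv] at h1
    have hpos : 1 ≤ T.card := Finset.card_pos.2 ⟨v, hv⟩
    push_cast [hpos] at h1
    have h3 : ((E T).card : ℤ) ≤ (E (T.erase v)).card + (T.filter (G.Adj v)).card := by
      exact_mod_cast h2
    have : (d : ℤ) ≤ (T.filter (G.Adj v)).card := by linarith
    exact_mod_cast this

section

open Finset

/-! ### Random edge sets -/

/-- The expectation of `Φ A` for the random subset `A` of `E` that contains every element
independently with probability `p`, written as a finite sum. -/
noncomputable def EE {E : Type*} [Fintype E] [DecidableEq E] (p : ℝ) (Φ : Finset E → ℝ) : ℝ :=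
  ∑ A : Finset E, p ^ A.card * (1 - p) ^ Aᶜ.card * Φ A

section
variable {E : Type*} [Fintype E] [DecidableEq E] {p : ℝ}

lemma EE_prod (f h : E → ℝ) :
    EE p (fun A => (∏ e ∈ A, f e) * ∏ e ∈ Aᶜ, h e) = ∏ e, (p * f e + (1 - p) * h e) := by
  rw [EE, Fintype.prod_add]
  refine Finset.sum_congr rfl fun A _ => ?_
  rw [Finset.prod_mul_distrib, Finset.prod_mul_distrib, Finset.prod_const, Finset.prod_const]
  ring

lemma EE_pow (F : Finset E) (a : ℝ) :
    EE p (fun A => a ^ (A ∩ F).card) = (p * a + (1 - p)) ^ F.card := by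
  have h := EE_prod (p := p) (fun e => if e ∈ F then a else 1) (fun _ => 1)
  have h1 : ∀ A : Finset E, ((∏ e ∈ A, if e ∈ F then a else 1) * ∏ e ∈ Aᶜ, (1 : ℝ)) =
      a ^ (A ∩ F).card := by
    intro A
    rw [Finset.prod_const_one, mul_one, Finset.prod_ite, Finset.prod_const_one, mul_one,
      Finset.prod_const, Finset.filter_mem_eq_inter]
  simp_rw [h1] at h
  rw [h]
  have h2 : ∀ e, p * (if e ∈ F then a else 1) + (1 - p) * 1 =
      if e ∈ F then p * a + (1 - p) else 1 := by
    intro e; split_ifs <;> ring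
  simp_rw [h2]
  rw [Finset.prod_ite, Finset.prod_const_one, mul_one, Finset.prod_const]
  simp

lemma EE_subset (R : Finset E) :
    EE p (fun A => if R ⊆ A then 1 else 0) = p ^ R.card := by
  have h := EE_prod (p := p) (fun _ => 1) (fun e => if e ∈ R then 0 else 1)
  have h1 : ∀ A : Finset E, ((∏ e ∈ A, (1 : ℝ)) * ∏ e ∈ Aᶜ, if e ∈ R then (0 : ℝ) else 1) =
      if R ⊆ A then 1 else 0 := by
    intro A
    rw [Finset.prod_const_one, one_mul]
    split_ifs with hs
    · refine Finset.prod_eq_one fun e he => ?_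
      rw [if_neg]
      intro h; exact (Finset.mem_compl.1 he) (hs h)
    · rw [Finset.not_subset] at hs
      obtain ⟨e, heR, heA⟩ := hs
      exact Finset.prod_eq_zero (Finset.mem_compl.2 heA) (by simp [heR])
  simp_rw [h1] at h
  rw [h]
  have h2 : ∀ e, p * 1 + (1 - p) * (if e ∈ R then (0 : ℝ) else 1) = if e ∈ R then p else 1 := by
    intro e; split_ifs <;> ring
  simp_rw [h2]
  rw [Finset.prod_ite, Finset.prod_const_one, mul_one, Finset.prod_const]
  simp

lemma EE_add (Φ Ψ : Finset E → ℝ) : EE p (fun A => Φ A + Ψ A) = EE p Φ + EE p Ψ := by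
  simp only [EE, mul_add, Finset.sum_add_distrib]

lemma EE_mul (c : ℝ) (Φ : Finset E → ℝ) : EE p (fun A => c * Φ A) = c * EE p Φ := by
  simp only [EE, Finset.mul_sum]
  exact Finset.sum_congr rfl fun A _ => by ring

lemma EE_sum {ι : Type*} (s : Finset ι) (Φ : ι → Finset E → ℝ) :
    EE p (fun A => ∑ i ∈ s, Φ i A) = ∑ i ∈ s, EE p (Φ i) := by
  simp only [EE, Finset.mul_sum]
  rw [Finset.sum_comm]

lemma exists_lt_one (hp0 : 0 ≤ p) (hp1 : p ≤ 1) (Φ : Finset E → ℝ) (h : EE p Φ < 1) :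
    ∃ A, Φ A < 1 := by
  by_contra! hcon
  have h1 : EE p (fun A : Finset E => (1 : ℝ)) = 1 := by
    have := EE_pow (p := p) (∅ : Finset E) 1
    simpa using this
  have h2 : EE p (fun A : Finset E => (1 : ℝ)) ≤ EE p Φ := by
    refine Finset.sum_le_sum fun A _ => ?_
    have : 0 ≤ p ^ A.card * (1 - p) ^ Aᶜ.card :=
      mul_nonneg (pow_nonneg hp0 _) (pow_nonneg (by linarith) _)
    exact mul_le_mul_of_nonneg_left (hcon A) this
  linarith

/-- Exponential-moment form of the lower tail estimate for `|A ∩ F|`: the function under the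
expectation is at least `1` as soon as `|A ∩ F| ≤ p |F| / 2`. The constant is
`3 / 20 ≤ (1 - log 2) / 2`. -/
lemma EE_lower (hp0 : 0 ≤ p) (hp1 : p ≤ 1) (F : Finset E) :
    EE p (fun A => Real.exp (Real.log 2 * (p * F.card / 2)) * (1 / 2 : ℝ) ^ (A ∩ F).card) ≤
      Real.exp (-(3 / 20 * (p * F.card))) := by
  rw [EE_mul, EE_pow]
  have h1 : p * (1 / 2) + (1 - p) ≤ Real.exp (-(p / 2)) := by
    have := Real.add_one_le_exp (-(p / 2)); linarith
  have h2 : (p * (1 / 2) + (1 - p)) ^ F.card ≤ Real.exp (-(p / 2)) ^ F.card :=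
    pow_le_pow_left₀ (by linarith) h1 _
  rw [← Real.exp_nat_mul] at h2
  refine (mul_le_mul_of_nonneg_left h2 (Real.exp_pos _).le).trans ?_
  rw [← Real.exp_add, Real.exp_le_exp]
  have h3 : 0 ≤ p * F.card := by positivity
  nlinarith [Real.log_two_lt_d9]

/-- Exponential-moment form of the upper tail estimate for `|A ∩ F|`: when `0 ≤ l`, the function
under the expectation is at least `1` as soon as `|A ∩ F| ≥ r`. -/
lemma EE_upper (hp0 : 0 ≤ p) (hp1 : p ≤ 1) (F : Finset E) (l r : ℝ) :
    EE p (fun A => Real.exp (-(l * r)) * Real.exp l ^ (A ∩ F).card) ≤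
      Real.exp (Real.exp l * p * F.card - l * r) := by
  rw [EE_mul, EE_pow]
  have h1 : p * Real.exp l + (1 - p) ≤ Real.exp (Real.exp l * p) := by
    have := Real.add_one_le_exp (Real.exp l * p); linarith
  have h2 : (p * Real.exp l + (1 - p)) ^ F.card ≤ Real.exp (Real.exp l * p) ^ F.card :=
    pow_le_pow_left₀ (by have := Real.exp_pos l; nlinarith [mul_nonneg hp0 this.le]) h1 _
  rw [← Real.exp_nat_mul] at h2
  refine (mul_le_mul_of_nonneg_left h2 (Real.exp_pos _).le).trans ?_
  rw [← Real.exp_add, Real.exp_le_exp]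
  linarith

/-- A weighted count of the pairwise disjoint subfamilies of `𝒩` all of whose members lie in `A`.
By disjointness a subfamily `𝒯` survives with probability `p ^ (3 |𝒯|)`. -/
lemma EE_families (hp0 : 0 ≤ p) (𝒩 : Finset (Finset E)) (h𝒩 : ∀ R ∈ 𝒩, R.card = 3) (a : ℝ)
    (ha : 0 ≤ a) :
    EE p (fun A => ∑ 𝒯 ∈ 𝒩.powerset.filter (fun 𝒯 => ∀ R ∈ 𝒯, ∀ R' ∈ 𝒯, R ≠ R' → Disjoint R R'),
      a ^ 𝒯.card * (if 𝒯.biUnion id ⊆ A then 1 else 0)) ≤ Real.exp (a * p ^ 3 * 𝒩.card) := by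
  rw [EE_sum]
  calc _ = ∑ 𝒯 ∈ 𝒩.powerset.filter (fun 𝒯 => ∀ R ∈ 𝒯, ∀ R' ∈ 𝒯, R ≠ R' → Disjoint R R'),
        (a * p ^ 3) ^ 𝒯.card := by
        refine Finset.sum_congr rfl fun 𝒯 h𝒯 => ?_
        rw [Finset.mem_filter, Finset.mem_powerset] at h𝒯
        have hb : (𝒯.biUnion id).card = 𝒯.card * 3 := by
          rw [Finset.card_biUnion (t := id) (fun R hR R' hR' h => h𝒯.2 R hR R' hR' h)]
          exact Finset.sum_const_nat fun R hR => h𝒩 R (h𝒯.1 hR)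
        rw [EE_mul, EE_subset, hb, mul_pow, ← pow_mul, mul_comm 3]
    _ ≤ ∑ 𝒯 ∈ 𝒩.powerset, (a * p ^ 3) ^ 𝒯.card :=
        Finset.sum_le_sum_of_subset_of_nonneg (Finset.filter_subset _ _)
          (fun _ _ _ => by positivity)
    _ = (a * p ^ 3 + 1) ^ 𝒩.card := by
        rw [← Finset.sum_pow_mul_eq_add_pow]; simp
    _ ≤ Real.exp (a * p ^ 3) ^ 𝒩.card :=
        pow_le_pow_left₀ (by positivity) (Real.add_one_le_exp _) _
    _ = _ := by rw [← Real.exp_nat_mul]; congr 1; ring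
end

/-! ### Penalties for the bad events -/

/-- The unordered pairs with one end in `X` and the other in `Y`. -/
def crossEdges {V : Type*} [DecidableEq V] (X Y : Finset V) : Finset (Sym2 V) :=
  (X ×ˢ Y).image (fun e => s(e.1, e.2))

lemma card_crossEdges_le {V : Type*} [DecidableEq V] (X Y : Finset V) :
    (crossEdges X Y).card ≤ X.card * Y.card :=
  Finset.card_image_le.trans (Finset.card_product _ _).le

lemma crossEdges_injOn {V : Type*} [DecidableEq V] (X Y : Finset V) (h : Disjoint X Y) :
    Set.InjOn (fun e : V × V => s(e.1, e.2)) (X ×ˢ Y : Finset (V × V)) := by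
  rintro ⟨a, b⟩ he ⟨a', b'⟩ he' hee
  simp only [Finset.mem_coe, Finset.mem_product] at he he'
  simp only [Sym2.eq_iff] at hee
  rcases hee with ⟨rfl, rfl⟩ | ⟨rfl, rfl⟩
  · rfl
  · exact absurd he.2 (Finset.disjoint_left.1 h he'.1)

lemma card_crossEdges {V : Type*} [DecidableEq V] (X Y : Finset V) (h : Disjoint X Y) :
    (crossEdges X Y).card = X.card * Y.card := by
  rw [crossEdges, Finset.card_image_of_injOn (crossEdges_injOn X Y h), Finset.card_product]

/-- The edge set of the triangle `a b c`. -/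
def tri {V : Type*} [DecidableEq V] (a b c : V) : Finset (Sym2 V) := {s(a, b), s(b, c), s(a, c)}

/-- The edge sets of the triangles with an edge between `X` and `Y`. The condition on the
cardinality discards the degenerate triples. -/
def crossTri {V : Type*} [Fintype V] [DecidableEq V] (X Y : Finset V) :
    Finset (Finset (Sym2 V)) :=
  ((X ×ˢ Y ×ˢ (Finset.univ : Finset V)).image (fun e => tri e.1 e.2.1 e.2.2)).filter
    (fun R => R.card = 3)

lemma card_crossTri_le {V : Type*} [Fintype V] [DecidableEq V] (X Y : Finset V) :
    (crossTri X Y).card ≤ X.card * Y.card * Fintype.card V := by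
  refine (Finset.card_filter_le _ _).trans (Finset.card_image_le.trans ?_)
  rw [Finset.card_product, Finset.card_product, Finset.card_univ, mul_assoc]

/-- The pairs of disjoint sets of `t` vertices. -/
def disjPairs (n t : ℕ) : Finset (Finset (Fin n) × Finset (Fin n)) :=
  (Finset.univ.powersetCard t ×ˢ Finset.univ.powersetCard t).filter (fun P => Disjoint P.1 P.2)

lemma mem_disjPairs (n t : ℕ) (P : Finset (Fin n) × Finset (Fin n)) :
    P ∈ disjPairs n t ↔ (P.1.card = t ∧ P.2.card = t) ∧ Disjoint P.1 P.2 := by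
  simp [disjPairs]

lemma card_disjPairs_le (n t : ℕ) : (disjPairs n t).card ≤ n ^ t * n ^ t := by
  refine (Finset.card_filter_le _ _).trans ?_
  rw [Finset.card_product, Finset.card_powersetCard, Finset.card_univ, Fintype.card_fin]
  exact Nat.mul_le_mul (Nat.choose_le_pow _ _) (Nat.choose_le_pow _ _)

/-- A penalty that is at least `1` if some pair of disjoint `t`-sets `X`, `Y` spans at most half
of the expected number `p t ^ 2` of edges of `A`. -/
noncomputable def pen1 (n : ℕ) (p : ℝ) (t : ℕ) (A : Finset (Sym2 (Fin n))) : ℝ :=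
  ∑ P ∈ disjPairs n t, Real.exp (Real.log 2 * (p * (crossEdges P.1 P.2).card / 2)) *
    (1 / 2 : ℝ) ^ (A ∩ crossEdges P.1 P.2).card

/-- A penalty that is at least `1` if for some pair of disjoint `t`-sets `X`, `Y` there are at
least `p t ^ 2 / 8` pairwise edge-disjoint triangles of `A` having an edge between `X` and `Y`. -/
noncomputable def pen2 (n : ℕ) (p : ℝ) (t : ℕ) (A : Finset (Sym2 (Fin n))) : ℝ :=
  ∑ P ∈ disjPairs n t, Real.exp (-(p * t ^ 2 / 4)) *
    ∑ 𝒯 ∈ (crossTri P.1 P.2).powerset.filter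
      (fun 𝒯 => ∀ R ∈ 𝒯, ∀ R' ∈ 𝒯, R ≠ R' → Disjoint R R'),
      Real.exp 2 ^ 𝒯.card * (if 𝒯.biUnion id ⊆ A then 1 else 0)

/-- A penalty that, for `0 ≤ l`, is at least `1` if for some `1 ≤ x ≤ M` there are nonempty sets
of at most `x` and `5 m x` vertices with at least `d x / 2` edges of `A` between them. The sets
are encoded as the images of maps from `Fin x` and `Fin (5 * m * x)`; nothing is claimed about
disjointness. -/
noncomputable def pen3 (n : ℕ) (l : ℝ) (m d M : ℕ) (A : Finset (Sym2 (Fin n))) : ℝ :=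
  ∑ x ∈ Finset.Icc 1 M, ∑ f : Fin x → Fin n, ∑ g : Fin (5 * m * x) → Fin n,
    Real.exp (-(l * (d * x / 2))) *
      Real.exp l ^ (A ∩ crossEdges (Finset.univ.image f) (Finset.univ.image g)).card

lemma card_pairs_exp (n t : ℕ) (hn : 1 ≤ n) :
    ((disjPairs n t).card : ℝ) ≤ Real.exp (2 * t * Real.log n) := by
  have h : ((disjPairs n t).card : ℝ) ≤ (n : ℝ) ^ t * n ^ t := by
    exact_mod_cast card_disjPairs_le n t
  refine h.trans (le_of_eq ?_)
  have hn' : (0 : ℝ) < n := by exact_mod_cast hn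
  rw [← pow_add, ← Real.exp_log (pow_pos hn' _), Real.log_pow]
  congr 1; push_cast; ring

/-- The union bound over pairs of `t`-sets, where `p t` exceeds a multiple of `log n`. -/
lemma exp_small (n t : ℕ) (p : ℝ) (hL : 1 ≤ Real.log n)
    (ht : 30 * Real.log n ≤ p * t) (ht1 : 30 ≤ t) :
    Real.exp (2 * t * Real.log n) * Real.exp (-(3 / 20 * (p * t ^ 2))) ≤ 1 / 10 := by
  rw [← Real.exp_add]
  have ht' : (30 : ℝ) ≤ t := by exact_mod_cast ht1
  have h1 : 30 * Real.log n * t ≤ p * t * t := by gcongr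
  have h2 : (30 : ℝ) ≤ t * Real.log n := by nlinarith
  have h3 : 2 * t * Real.log n + -(3 / 20 * (p * t ^ 2)) ≤ -30 := by nlinarith
  refine (Real.exp_le_exp.2 h3).trans ?_
  rw [Real.exp_neg]
  have := Real.add_one_le_exp (30 : ℝ)
  rw [inv_le_comm₀ (Real.exp_pos _) (by norm_num)]
  linarith

lemma EE_pen1 (n t : ℕ) (p : ℝ) (hp0 : 0 ≤ p) (hp1 : p ≤ 1) (hn : 1 ≤ n)
    (hL : 1 ≤ Real.log n) (ht : 30 * Real.log n ≤ p * t) (ht1 : 30 ≤ t) :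
    EE p (pen1 n p t) ≤ 1 / 10 := by
  unfold pen1
  rw [EE_sum]
  refine le_trans (Finset.sum_le_card_nsmul _ _ (Real.exp (-(3 / 20 * (p * t ^ 2)))) ?_) ?_
  · intro P hP
    rw [mem_disjPairs] at hP
    refine (EE_lower hp0 hp1 _).trans (le_of_eq ?_)
    rw [card_crossEdges _ _ hP.2, hP.1.1, hP.1.2]
    congr 1; push_cast; ring
  · rw [nsmul_eq_mul]
    exact (mul_le_mul_of_nonneg_right (card_pairs_exp n t hn) (Real.exp_pos _).le).trans
      (exp_small n t p hL ht ht1)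

lemma EE_pen2 (n t : ℕ) (p : ℝ) (hp0 : 0 ≤ p) (hn : 1 ≤ n)
    (hpn : 100 * (p ^ 2 * n) ≤ 1)
    (hL : 1 ≤ Real.log n) (ht : 30 * Real.log n ≤ p * t) (ht1 : 30 ≤ t) :
    EE p (pen2 n p t) ≤ 1 / 10 := by
  unfold pen2
  rw [EE_sum]
  refine le_trans (Finset.sum_le_card_nsmul _ _ (Real.exp (-(3 / 20 * (p * t ^ 2)))) ?_) ?_
  · intro P hP
    rw [mem_disjPairs] at hP
    rw [EE_mul]
    refine (mul_le_mul_of_nonneg_left (EE_families hp0 (crossTri P.1 P.2)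
      (fun R hR => (Finset.mem_filter.1 hR).2) (Real.exp 2) (Real.exp_pos _).le)
      (Real.exp_pos _).le).trans ?_
    rw [← Real.exp_add, Real.exp_le_exp]
    have h1 : ((crossTri P.1 P.2).card : ℝ) ≤ t * t * n := by
      have := card_crossTri_le P.1 P.2
      rw [hP.1.1, hP.1.2, Fintype.card_fin] at this
      exact_mod_cast this
    have h2 : Real.exp 2 ≤ 7.4 := by
      have : Real.exp 2 = Real.exp 1 * Real.exp 1 := by rw [← Real.exp_add]; norm_num
      rw [this]
      nlinarith [Real.exp_one_lt_d9, Real.exp_pos 1]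
    have h3 : Real.exp 2 * p ^ 3 * (crossTri P.1 P.2).card ≤ 7.4 * p ^ 3 * (t * t * n) := by
      gcongr
    have h4 : 0 ≤ p * (t : ℝ) ^ 2 := by positivity
    have h5 : 7.4 * p ^ 3 * (t * t * n) ≤ 0.074 * (p * (t : ℝ) ^ 2) := by
      have := mul_le_mul_of_nonneg_right hpn h4
      nlinarith
    nlinarith
  · rw [nsmul_eq_mul]
    exact (mul_le_mul_of_nonneg_right (card_pairs_exp n t hn) (Real.exp_pos _).le).trans
      (exp_small n t p hL ht ht1)

lemma EE_pen3 (n m d M : ℕ) (p l : ℝ) (hp0 : 0 ≤ p) (hp1 : p ≤ 1) (hn : 1 ≤ n)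
    (hL : 1 ≤ Real.log n) (hm : 1 ≤ m) (hlp : Real.exp l * p * M ≤ 1) (hMn : M ≤ 20 * n)
    (hld : 40 * m * Real.log n ≤ l * d) :
    EE p (pen3 n l m d M) ≤ 1 / 10 := by
  unfold pen3
  rw [EE_sum]
  have hn' : (0 : ℝ) < n := by exact_mod_cast hn
  have hm' : (1 : ℝ) ≤ m := by exact_mod_cast hm
  have hterm : ∀ x ∈ Finset.Icc 1 M,
      EE p (fun A : Finset (Sym2 (Fin n)) => ∑ f : Fin x → Fin n,
        ∑ g : Fin (5 * m * x) → Fin n, Real.exp (-(l * (d * x / 2))) *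
        Real.exp l ^ (A ∩ crossEdges (Finset.univ.image f) (Finset.univ.image g)).card) ≤
      Real.exp (-(9 * Real.log n)) := by
    intro x hx
    rw [Finset.mem_Icc] at hx
    have hx1 : (1 : ℝ) ≤ x := by exact_mod_cast hx.1
    have hxM : (x : ℝ) ≤ M := by exact_mod_cast hx.2
    rw [EE_sum]
    have hone : ∀ f : Fin x → Fin n, ∀ g : Fin (5 * m * x) → Fin n,
        EE p (fun A : Finset (Sym2 (Fin n)) => Real.exp (-(l * (d * x / 2))) *
        Real.exp l ^ (A ∩ crossEdges (Finset.univ.image f) (Finset.univ.image g)).card) ≤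
        Real.exp (5 * m * x - 20 * m * x * Real.log n) := by
      intro f g
      refine (EE_upper hp0 hp1 _ l (d * x / 2)).trans ?_
      rw [Real.exp_le_exp]
      have hc : ((crossEdges (Finset.univ.image f) (Finset.univ.image g)).card : ℝ) ≤
          x * (5 * m * x) := by
        have h := card_crossEdges_le (Finset.univ.image f) (Finset.univ.image g)
        have h1 : (Finset.univ.image f).card ≤ x := by
          simpa using Finset.card_image_le (s := Finset.univ) (f := f)
        have h2 : (Finset.univ.image g).card ≤ 5 * m * x := by
          simpa using Finset.card_image_le (s := Finset.univ) (f := g)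
        exact_mod_cast h.trans (Nat.mul_le_mul h1 h2)
      have h1 : Real.exp l * p * (crossEdges (Finset.univ.image f) (Finset.univ.image g)).card ≤
          Real.exp l * p * (x * (5 * m * x)) := by gcongr
      have h2 : Real.exp l * p * x ≤ 1 :=
        le_trans (mul_le_mul_of_nonneg_left hxM (by positivity)) hlp
      have h3 : Real.exp l * p * x * (5 * m * x) ≤ 1 * (5 * m * x) := by gcongr
      have h4 : 40 * m * Real.log n * x ≤ l * d * x := by gcongr
      linarith
    have hsum : ∑ f : Fin x → Fin n,
        EE p (fun A : Finset (Sym2 (Fin n)) => ∑ g : Fin (5 * m * x) → Fin n,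
        Real.exp (-(l * (d * x / 2))) *
        Real.exp l ^ (A ∩ crossEdges (Finset.univ.image f) (Finset.univ.image g)).card) ≤
        (n : ℝ) ^ x * ((n : ℝ) ^ (5 * m * x) *
          Real.exp (5 * m * x - 20 * m * x * Real.log n)) := by
      refine (Finset.sum_le_card_nsmul _ _ ((n : ℝ) ^ (5 * m * x) *
          Real.exp (5 * m * x - 20 * m * x * Real.log n)) ?_).trans (le_of_eq ?_)
      · intro f _
        rw [EE_sum]
        refine (Finset.sum_le_card_nsmul _ _ _ fun g _ => hone f g).trans (le_of_eq ?_)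
        simp
      · simp
    refine hsum.trans ?_
    have e1 : ∀ y : ℕ, (n : ℝ) ^ y = Real.exp (y * Real.log n) := by
      intro y
      rw [← Real.log_pow, Real.exp_log (pow_pos hn' _)]
    rw [e1, e1, ← Real.exp_add, ← Real.exp_add, Real.exp_le_exp]
    push_cast
    have hxL : (1 : ℝ) * Real.log n ≤ x * Real.log n := by gcongr
    have hmx : (x : ℝ) * Real.log n * 1 ≤ x * Real.log n * m := by gcongr
    have hmx2 : (m : ℝ) * x * 1 ≤ m * x * Real.log n := by gcongr
    nlinarith
  refine (Finset.sum_le_card_nsmul _ _ _ hterm).trans ?_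
  rw [nsmul_eq_mul, Nat.card_Icc, Nat.add_sub_cancel]
  have hM : (M : ℝ) ≤ 20 * n := by exact_mod_cast hMn
  have h1 : Real.exp (-(9 * Real.log n)) = Real.exp (-(8 * Real.log n)) * (n : ℝ)⁻¹ := by
    rw [← Real.exp_log (inv_pos.2 hn'), ← Real.exp_add, Real.log_inv]
    congr 1; ring
  have h2 : Real.exp (-(8 * Real.log n)) ≤ 1 / 200 := by
    refine (Real.exp_le_exp.2 (show -(8 * Real.log n) ≤ -8 by linarith)).trans ?_
    rw [Real.exp_neg, inv_le_comm₀ (Real.exp_pos _) (by norm_num)]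
    have h3 : Real.exp 8 = Real.exp 1 ^ 8 := by rw [← Real.exp_nat_mul]; norm_num
    have h4 : (2 : ℝ) ^ 8 ≤ Real.exp 1 ^ 8 := by
      gcongr; linarith [Real.add_one_le_exp (1 : ℝ)]
    rw [h3]; norm_num at h4 ⊢; linarith
  rw [h1]
  calc (M : ℝ) * (Real.exp (-(8 * Real.log n)) * (n : ℝ)⁻¹)
      ≤ 20 * n * (1 / 200 * (n : ℝ)⁻¹) := by gcongr
    _ = 1 / 10 := by field_simp; norm_num

/-! ### Deleting triangles from a random graph -/

lemma tri_of_mem {V : Type*} [DecidableEq V] {a b c x y : V} (h : s(x, y) ∈ tri a b c) :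
    ∃ z, tri a b c = tri x y z := by
  simp only [tri, Finset.mem_insert, Finset.mem_singleton, Sym2.eq_iff] at h
  rcases h with (⟨rfl, rfl⟩ | ⟨rfl, rfl⟩) | (⟨rfl, rfl⟩ | ⟨rfl, rfl⟩) | (⟨rfl, rfl⟩ | ⟨rfl, rfl⟩)
  · exact ⟨c, rfl⟩
  · refine ⟨c, ?_⟩
    ext e; simp only [tri, Finset.mem_insert, Finset.mem_singleton, Sym2.eq_swap (a := x)]; tauto
  · refine ⟨a, ?_⟩
    ext e; simp only [tri, Finset.mem_insert, Finset.mem_singleton, Sym2.eq_swap (a := a)]; tauto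
  · refine ⟨a, ?_⟩
    ext e
    simp only [tri, Finset.mem_insert, Finset.mem_singleton, Sym2.eq_swap (a := a),
      Sym2.eq_swap (a := y) (b := x)]
    tauto
  · refine ⟨b, ?_⟩
    ext e
    simp only [tri, Finset.mem_insert, Finset.mem_singleton, Sym2.eq_swap (a := y) (b := b)]
    tauto
  · refine ⟨b, ?_⟩
    ext e
    simp only [tri, Finset.mem_insert, Finset.mem_singleton, Sym2.eq_swap (a := y),
      Sym2.eq_swap (a := b) (b := x)]
    tauto

lemma card_tri {V : Type*} [DecidableEq V] {a b c : V} (hab : a ≠ b) (hac : a ≠ c)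
    (hbc : b ≠ c) : (tri a b c).card = 3 := by
  rw [tri, Finset.card_eq_three]
  refine ⟨_, _, _, ?_, ?_, ?_, rfl⟩ <;> simp [hab, hac, hbc, hab.symm, hac.symm]

/-- Deleting from `A` the edges of a maximal family of pairwise edge-disjoint triangles leaves a
triangle-free graph. Between disjoint sets `X` and `Y`, the deletion costs at most `3` edges for
each member of the family having an edge across. -/
lemma exists_pruned {V : Type*} [Fintype V] [DecidableEq V] (A : Finset (Sym2 V)) :
    ∃ G : SimpleGraph V, (∀ a b c, G.Adj a b → G.Adj a c → ¬ G.Adj b c) ∧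
      (∀ a b, G.Adj a b → s(a, b) ∈ A) ∧
      ∀ X Y : Finset V, Disjoint X Y → ∃ 𝒯 ⊆ crossTri X Y,
        (∀ R ∈ 𝒯, ∀ R' ∈ 𝒯, R ≠ R' → Disjoint R R') ∧ 𝒯.biUnion id ⊆ A ∧
        ∃ P ⊆ X ×ˢ Y, (∀ e ∈ P, G.Adj e.1 e.2) ∧
          (A ∩ crossEdges X Y).card ≤ P.card + 3 * 𝒯.card := by
  classical
  let 𝒜 : Finset (Finset (Sym2 V)) :=
    Finset.univ.filter (fun R => R.card = 3 ∧ (∃ a b c, R = tri a b c) ∧ R ⊆ A)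
  let 𝒲 : Finset (Finset (Finset (Sym2 V))) :=
    𝒜.powerset.filter (fun 𝒯 => ∀ R ∈ 𝒯, ∀ R' ∈ 𝒯, R ≠ R' → Disjoint R R')
  obtain ⟨𝒯, h𝒯, hmax⟩ := Finset.exists_max_image 𝒲 Finset.card ⟨∅, by simp [𝒲]⟩
  obtain ⟨h𝒯A, h𝒯d⟩ := Finset.mem_filter.1 h𝒯
  rw [Finset.mem_powerset] at h𝒯A
  have h𝒯' : ∀ R ∈ 𝒯, R.card = 3 ∧ (∃ a b c, R = tri a b c) ∧ R ⊆ A := fun R hR =>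
    (Finset.mem_filter.1 (h𝒯A hR)).2
  set G : SimpleGraph V := SimpleGraph.fromEdgeSet ((A \ 𝒯.biUnion id : Finset (Sym2 V)) :
    Set (Sym2 V)) with hG
  have hadj : ∀ a b, G.Adj a b ↔ (s(a, b) ∈ A ∧ ∀ R ∈ 𝒯, s(a, b) ∉ R) ∧ a ≠ b := by
    intro a b
    rw [hG, SimpleGraph.fromEdgeSet_adj]
    simp
  refine ⟨G, ?_, fun a b h => ((hadj a b).1 h).1.1, ?_⟩
  · intro a b c hab hac hbc
    rw [hadj] at hab hac hbc
    have hmem : ∀ e ∈ tri a b c, e ∈ A ∧ ∀ R ∈ 𝒯, e ∉ R := by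
      intro e he
      simp only [tri, Finset.mem_insert, Finset.mem_singleton] at he
      rcases he with rfl | rfl | rfl
      · exact hab.1
      · exact hbc.1
      · exact hac.1
    have hR0 : s(a, b) ∈ tri a b c := by simp [tri]
    have hnot : tri a b c ∉ 𝒯 := fun h => hab.1.2 _ h hR0
    have hdisj : ∀ R ∈ 𝒯, Disjoint (tri a b c) R := fun R hR =>
      Finset.disjoint_left.2 fun e he => (hmem e he).2 R hR
    have hins : insert (tri a b c) 𝒯 ∈ 𝒲 := by
      refine Finset.mem_filter.2 ⟨Finset.mem_powerset.2 (Finset.insert_subset ?_ h𝒯A), ?_⟩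
      · exact Finset.mem_filter.2 ⟨Finset.mem_univ _, card_tri hab.2 hac.2 hbc.2, ⟨a, b, c, rfl⟩,
          fun e he => (hmem e he).1⟩
      · intro R hR R' hR' hne
        rcases Finset.mem_insert.1 hR with h | h <;> rcases Finset.mem_insert.1 hR' with h' | h'
        · exact absurd (h.trans h'.symm) hne
        · exact h ▸ hdisj R' h'
        · exact h' ▸ (hdisj R h).symm
        · exact h𝒯d R h R' h' hne
    have := hmax _ hins
    rw [Finset.card_insert_of_notMem hnot] at this
    omega
  · intro X Y hXY
    refine ⟨𝒯.filter (fun R => R ∈ crossTri X Y), fun R hR => (Finset.mem_filter.1 hR).2,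
      fun R hR R' hR' => h𝒯d R (Finset.mem_filter.1 hR).1 R' (Finset.mem_filter.1 hR').1, ?_,
      (X ×ˢ Y).filter (fun e => G.Adj e.1 e.2), Finset.filter_subset _ _,
      fun e he => (Finset.mem_filter.1 he).2, ?_⟩
    · intro e he
      obtain ⟨R, hR, heR⟩ := Finset.mem_biUnion.1 he
      exact (h𝒯' R (Finset.mem_filter.1 hR).1).2.2 heR
    · have hsub : A ∩ crossEdges X Y ⊆
          ((X ×ˢ Y).filter (fun e => G.Adj e.1 e.2)).image (fun e => s(e.1, e.2)) ∪
          (𝒯.filter (fun R => R ∈ crossTri X Y)).biUnion id := by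
        intro e he
        obtain ⟨heA, heF⟩ := Finset.mem_inter.1 he
        obtain ⟨⟨x, y⟩, hxy, rfl⟩ := Finset.mem_image.1 heF
        obtain ⟨hx, hy⟩ := Finset.mem_product.1 hxy
        have hne : x ≠ y := fun h => Finset.disjoint_left.1 hXY hx (h ▸ hy)
        rw [Finset.mem_union]
        by_cases h : ∀ R ∈ 𝒯, s(x, y) ∉ R
        · left
          exact Finset.mem_image.2 ⟨(x, y), Finset.mem_filter.2 ⟨hxy,
            (hadj x y).2 ⟨⟨heA, h⟩, hne⟩⟩, rfl⟩
        · right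
          push Not at h
          obtain ⟨R, hR, heR⟩ := h
          refine Finset.mem_biUnion.2 ⟨R, Finset.mem_filter.2 ⟨hR, ?_⟩, heR⟩
          obtain ⟨h3, ⟨a, b, c, rfl⟩, _⟩ := h𝒯' R hR
          obtain ⟨z, hz⟩ := tri_of_mem heR
          refine Finset.mem_filter.2 ⟨Finset.mem_image.2 ⟨(x, y, z), ?_, hz.symm⟩, h3⟩
          simp only [Finset.mem_product, Finset.mem_univ, and_true]
          exact ⟨hx, hy⟩
      refine (Finset.card_le_card hsub).trans ((Finset.card_union_le _ _).trans ?_)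
      refine Nat.add_le_add Finset.card_image_le ?_
      rw [mul_comm]
      exact Finset.card_biUnion_le_card_mul _ _ _ fun R hR =>
        (h𝒯' R (Finset.mem_filter.1 hR).1).1.le

/-- The sets `X` and `Y` may overlap, so an edge can be counted by both of its orientations. -/
lemma card_pairs_le_two_mul {V : Type*} [DecidableEq V] (A : Finset (Sym2 V)) (X Y : Finset V)
    (P : Finset (V × V)) (hP : P ⊆ X ×ˢ Y) (hA : ∀ e ∈ P, s(e.1, e.2) ∈ A) :
    P.card ≤ 2 * (A ∩ crossEdges X Y).card := by
  have h1 : P.image (fun e => s(e.1, e.2)) ⊆ A ∩ crossEdges X Y := by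
    intro e he
    obtain ⟨q, hq, rfl⟩ := Finset.mem_image.1 he
    exact Finset.mem_inter.2 ⟨hA q hq, Finset.mem_image.2 ⟨q, hP hq, rfl⟩⟩
  refine (Finset.card_le_mul_card_image P 2 ?_).trans
    (Nat.mul_le_mul_left 2 (Finset.card_le_card h1))
  intro e he
  obtain ⟨⟨a, b⟩, hq, rfl⟩ := Finset.mem_image.1 he
  refine (Finset.card_le_card (t := {(a, b), (b, a)}) ?_).trans Finset.card_le_two
  rintro ⟨c, d⟩ hcd
  have := (Finset.mem_filter.1 hcd).2
  simp only [Sym2.eq_iff] at this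
  simp only [Finset.mem_insert, Finset.mem_singleton, Prod.mk.injEq]
  exact this

/-- The random construction. Some `A` has total penalty less than `1`, and pruning it gives a
triangle-free graph that still has at least `p t ^ 2 / 2 - 3 p t ^ 2 / 8 = p t ^ 2 / 8` edges
between disjoint sets of size `t ∈ {t₀, t₁}`, and in which a small set `X` sends fewer than `d |X|`
edges to any set of at most `5 m |X|` vertices. -/
lemma exists_good_graph (n m d M t₀ t₁ : ℕ) (p l : ℝ) (hp0 : 0 ≤ p) (hp1 : p ≤ 1) (hn : 1 ≤ n)
    (hpn : 100 * (p ^ 2 * n) ≤ 1) (hL : 1 ≤ Real.log n) (hm : 1 ≤ m)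
    (hl : 0 < l) (hlp : Real.exp l * p * M ≤ 1) (hMn : M ≤ 20 * n)
    (hld : 40 * m * Real.log n ≤ l * d)
    (ht₀ : 30 * Real.log n ≤ p * t₀) (ht₁ : 30 * Real.log n ≤ p * t₁) :
    ∃ G : SimpleGraph (Fin n), (∀ a b c, G.Adj a b → G.Adj a c → ¬ G.Adj b c) ∧
      (∀ t, t = t₀ ∨ t = t₁ → ∀ X Y : Finset (Fin n), Disjoint X Y → X.card = t → Y.card = t →
        ∃ P ⊆ X ×ˢ Y, (∀ e ∈ P, G.Adj e.1 e.2) ∧ p * t ^ 2 / 8 < P.card) ∧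
      (∀ X Y : Finset (Fin n), X.Nonempty → X.card ≤ M → Y.Nonempty → Y.card ≤ 5 * m * X.card →
        ∀ P ⊆ X ×ˢ Y, (∀ e ∈ P, G.Adj e.1 e.2) → P.card < d * X.card) := by
  have h30 : ∀ t : ℕ, 30 * Real.log n ≤ p * t → 30 ≤ t := by
    intro t ht
    have h1 : p * t ≤ 1 * t := by gcongr
    have : (30 : ℝ) ≤ t := by linarith
    exact_mod_cast this
  have htot : EE p (fun A => pen1 n p t₀ A + (pen1 n p t₁ A + (pen2 n p t₀ A +
      (pen2 n p t₁ A + pen3 n l m d M A)))) < 1 := by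
    rw [EE_add, EE_add, EE_add, EE_add]
    have h1 := EE_pen1 n t₀ p hp0 hp1 hn hL ht₀ (h30 _ ht₀)
    have h2 := EE_pen1 n t₁ p hp0 hp1 hn hL ht₁ (h30 _ ht₁)
    have h3 := EE_pen2 n t₀ p hp0 hn hpn hL ht₀ (h30 _ ht₀)
    have h4 := EE_pen2 n t₁ p hp0 hn hpn hL ht₁ (h30 _ ht₁)
    have h5 := EE_pen3 n m d M p l hp0 hp1 hn hL hm hlp hMn hld
    linarith
  obtain ⟨A, hA⟩ := exists_lt_one hp0 hp1 _ htot
  have n1 : ∀ t, 0 ≤ pen1 n p t A := fun t => Finset.sum_nonneg fun P _ => by positivity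
  have n2' : ∀ P : Finset (Fin n) × Finset (Fin n),
      0 ≤ ∑ 𝒯 ∈ (crossTri P.1 P.2).powerset.filter
      (fun 𝒯 => ∀ R ∈ 𝒯, ∀ R' ∈ 𝒯, R ≠ R' → Disjoint R R'),
      Real.exp 2 ^ 𝒯.card * (if 𝒯.biUnion id ⊆ A then (1 : ℝ) else 0) := fun P =>
    Finset.sum_nonneg fun _ _ => mul_nonneg (by positivity) (by split_ifs <;> norm_num)
  have n2 : ∀ t, 0 ≤ pen2 n p t A := fun t => Finset.sum_nonneg fun P _ =>
    mul_nonneg (Real.exp_pos _).le (n2' P)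
  have n3 : 0 ≤ pen3 n l m d M A := Finset.sum_nonneg fun x _ => Finset.sum_nonneg fun f _ =>
    Finset.sum_nonneg fun g _ => by positivity
  have p1 : ∀ t, t = t₀ ∨ t = t₁ → pen1 n p t A < 1 := by
    have := n1 t₀; have := n1 t₁; have := n2 t₀; have := n2 t₁
    rintro t (rfl | rfl) <;> linarith
  have p2 : ∀ t, t = t₀ ∨ t = t₁ → pen2 n p t A < 1 := by
    have := n1 t₀; have := n1 t₁; have := n2 t₀; have := n2 t₁
    rintro t (rfl | rfl) <;> linarith
  have p3 : pen3 n l m d M A < 1 := by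
    have := n1 t₀; have := n1 t₁; have := n2 t₀; have := n2 t₁
    linarith
  clear hA htot
  obtain ⟨G, hGtri, hGA, hG⟩ := exists_pruned A
  refine ⟨G, hGtri, ?_, ?_⟩
  · intro t ht X Y hXY hX hY
    obtain ⟨𝒯, h𝒯, h𝒯d, h𝒯A, P, hP, hPG, hcard⟩ := hG X Y hXY
    refine ⟨P, hP, hPG, ?_⟩
    have hmem : (X, Y) ∈ disjPairs n t := (mem_disjPairs _ _ _).2 ⟨⟨hX, hY⟩, hXY⟩
    have q1 : p * t ^ 2 / 2 < (A ∩ crossEdges X Y).card := by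
      have h1 := lt_of_le_of_lt (Finset.single_le_sum
        (f := fun P : Finset (Fin n) × Finset (Fin n) =>
          Real.exp (Real.log 2 * (p * (crossEdges P.1 P.2).card / 2)) *
          (1 / 2 : ℝ) ^ (A ∩ crossEdges P.1 P.2).card) (fun P _ => by positivity) hmem) (p1 t ht)
      simp only [card_crossEdges X Y hXY, hX, hY] at h1
      have h2 : (1 / 2 : ℝ) ^ (A ∩ crossEdges X Y).card =
          Real.exp (-(Real.log 2 * (A ∩ crossEdges X Y).card)) := by
        rw [← Real.exp_log (show (0 : ℝ) < (1 / 2) ^ (A ∩ crossEdges X Y).card by positivity),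
          Real.log_pow, one_div, Real.log_inv]
        congr 1; ring
      rw [h2, ← Real.exp_add, Real.exp_lt_one_iff] at h1
      push_cast at h1
      have hlog : 0 < Real.log 2 := Real.log_pos (by norm_num)
      by_contra! hcon
      have := mul_le_mul_of_nonneg_left hcon hlog.le
      nlinarith
    have q2 : (𝒯.card : ℝ) < p * t ^ 2 / 8 := by
      have h1 := lt_of_le_of_lt (Finset.single_le_sum
        (f := fun P : Finset (Fin n) × Finset (Fin n) => Real.exp (-(p * t ^ 2 / 4)) *
          ∑ 𝒯 ∈ (crossTri P.1 P.2).powerset.filter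
          (fun 𝒯 => ∀ R ∈ 𝒯, ∀ R' ∈ 𝒯, R ≠ R' → Disjoint R R'),
          Real.exp 2 ^ 𝒯.card * (if 𝒯.biUnion id ⊆ A then (1 : ℝ) else 0))
        (fun P _ => mul_nonneg (Real.exp_pos _).le (n2' P)) hmem) (p2 t ht)
      have h𝒯mem : 𝒯 ∈ (crossTri X Y).powerset.filter
          (fun 𝒯 => ∀ R ∈ 𝒯, ∀ R' ∈ 𝒯, R ≠ R' → Disjoint R R') :=
        Finset.mem_filter.2 ⟨Finset.mem_powerset.2 h𝒯, h𝒯d⟩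
      have h2 := Finset.single_le_sum
        (f := fun 𝒯 : Finset (Finset (Sym2 (Fin n))) =>
          Real.exp 2 ^ 𝒯.card * (if 𝒯.biUnion id ⊆ A then (1 : ℝ) else 0))
        (fun _ _ => mul_nonneg (by positivity) (by split_ifs <;> norm_num))
        h𝒯mem
      have h3 := lt_of_le_of_lt (mul_le_mul_of_nonneg_left h2 (Real.exp_pos _).le) h1
      rw [if_pos h𝒯A, mul_one, ← Real.exp_nat_mul, ← Real.exp_add, Real.exp_lt_one_iff] at h3
      linarith
    have q3 : ((A ∩ crossEdges X Y).card : ℝ) ≤ P.card + 3 * 𝒯.card := by exact_mod_cast hcard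
    linarith
  · intro X Y hX hXM hY hYc P hP hPG
    have hcX : 0 < X.card := Finset.card_pos.2 hX
    have hsurj : ∀ (Z : Finset (Fin n)) (y : ℕ), Z.Nonempty → Z.card ≤ y →
        ∃ g : Fin y → Fin n, Finset.univ.image g = Z := by
      intro Z y hZ hZy
      obtain ⟨z0, hz0⟩ := hZ
      let e := Z.equivFin
      refine ⟨fun i => if h : i.val < Z.card then (e.symm ⟨i.val, h⟩ : Fin n) else z0, ?_⟩
      ext z
      simp only [Finset.mem_image, Finset.mem_univ, true_and]
      constructor
      · rintro ⟨i, rfl⟩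
        split_ifs with h
        · exact (e.symm ⟨i.val, h⟩).2
        · exact hz0
      · intro hz
        refine ⟨⟨(e ⟨z, hz⟩).val, lt_of_lt_of_le (e ⟨z, hz⟩).isLt hZy⟩, ?_⟩
        simp
    obtain ⟨f, hf⟩ := hsurj X X.card hX le_rfl
    obtain ⟨g, hg⟩ := hsurj Y _ hY hYc
    have h1 := Finset.single_le_sum
      (f := fun x : ℕ => ∑ f : Fin x → Fin n, ∑ g : Fin (5 * m * x) → Fin n,
        Real.exp (-(l * (d * x / 2))) *
        Real.exp l ^ (A ∩ crossEdges (Finset.univ.image f) (Finset.univ.image g)).card)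
      (fun x _ => Finset.sum_nonneg fun f _ => Finset.sum_nonneg fun g _ => by positivity)
      (Finset.mem_Icc.2 ⟨hcX, hXM⟩)
    have h2 := Finset.single_le_sum
      (f := fun f : Fin X.card → Fin n => ∑ g : Fin (5 * m * X.card) → Fin n,
        Real.exp (-(l * (d * X.card / 2))) *
        Real.exp l ^ (A ∩ crossEdges (Finset.univ.image f) (Finset.univ.image g)).card)
      (fun f _ => Finset.sum_nonneg fun g _ => by positivity) (Finset.mem_univ f)
    have h3 := Finset.single_le_sum
      (f := fun g : Fin (5 * m * X.card) → Fin n =>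
        Real.exp (-(l * (d * X.card / 2))) *
        Real.exp l ^ (A ∩ crossEdges (Finset.univ.image f) (Finset.univ.image g)).card)
      (fun g _ => by positivity) (Finset.mem_univ g)
    have h4 := lt_of_le_of_lt ((h3.trans h2).trans h1) p3
    rw [hf, hg, ← Real.exp_nat_mul, ← Real.exp_add, Real.exp_lt_one_iff] at h4
    have h5 := card_pairs_le_two_mul A X Y P hP (fun e he => hGA _ _ (hPG e he))
    have h6 : (P.card : ℝ) ≤ 2 * (A ∩ crossEdges X Y).card := by exact_mod_cast h5
    have h7 : (P.card : ℝ) < d * X.card := by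
      by_contra! hcon
      have := mul_le_mul_of_nonneg_left (hcon.trans h6) hl.le
      nlinarith
    exact_mod_cast h7

/-! ### Choice of parameters and conclusion -/

/-- In a graph with the properties of `exists_good_graph`, a set `S` of at least `2 t₁` vertices
contains a dense bipartite graph, hence a part `T` of minimum degree `d`. A small subset of `T` has more than
`5 m` times as many neighbours in `T`, for otherwise it would send too many edges to a small set;
so `exists_cycle` applies. -/
lemma containsCopy_cycle (n m d j t₁ δ : ℕ) (p : ℝ) (G : SimpleGraph (Fin n))
    (hm : 2 ≤ m) (hδ : δ ≤ 1) (hj : 1 ≤ j) (hd : 1 ≤ d) (hp : 0 ≤ p)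
    (hbip : ∀ t, t = m ^ j ∨ t = t₁ → ∀ X Y : Finset (Fin n), Disjoint X Y → X.card = t →
      Y.card = t → ∃ P ⊆ X ×ˢ Y, (∀ e ∈ P, G.Adj e.1 e.2) ∧ p * t ^ 2 / 8 < P.card)
    (hexp : ∀ X Y : Finset (Fin n), X.Nonempty → X.card ≤ m ^ (j - 1) → Y.Nonempty →
      Y.card ≤ 5 * m * X.card →
        ∀ P ⊆ X ×ˢ Y, (∀ e ∈ P, G.Adj e.1 e.2) → P.card < d * X.card)
    (ht₁ : (d : ℝ) * (2 * t₁) ≤ p * t₁ ^ 2 / 8)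
    (S : Finset (Fin n)) (hS : 2 * t₁ ≤ S.card) :
    ContainsCopy (SimpleGraph.cycleGraph (2 * j + 2 - δ)) (G.induce (S : Set (Fin n))) := by
  classical
  obtain ⟨X, hXS, hX⟩ := Finset.exists_subset_card_eq (show t₁ ≤ S.card by omega)
  obtain ⟨Y, hYS, hY⟩ := Finset.exists_subset_card_eq (s := S \ X) (n := t₁)
    (by rw [Finset.card_sdiff_of_subset hXS]; omega)
  have hXY : Disjoint X Y := (Finset.disjoint_of_subset_left hYS Finset.sdiff_disjoint).symm
  obtain ⟨P, hP, hPG, hPc⟩ := hbip t₁ (Or.inr rfl) X Y hXY hX hY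
  have hdeg : d * (X ∪ Y).card < ((X ×ˢ Y).filter (fun e => G.Adj e.1 e.2)).card := by
    have h1 : P.card ≤ ((X ×ˢ Y).filter (fun e => G.Adj e.1 e.2)).card :=
      Finset.card_le_card fun e he => Finset.mem_filter.2 ⟨hP he, hPG e he⟩
    rw [Finset.card_union_of_disjoint hXY, hX, hY]
    refine lt_of_lt_of_le ?_ h1
    have h2 : (d : ℝ) * (2 * t₁) < P.card := lt_of_le_of_lt ht₁ hPc
    have h3 : d * (2 * t₁) < P.card := by exact_mod_cast h2
    rwa [two_mul] at h3
  obtain ⟨T, hTXY, hTne, hTd⟩ := exists_min_degree G X Y hXY d hdeg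
  have hTS : T ⊆ S := hTXY.trans (Finset.union_subset hXS (hYS.trans Finset.sdiff_subset))
  have h_exp : ∀ X ⊆ T, X.Nonempty → X.card ≤ m ^ (j - 1) → ∀ Y : Finset (Fin n),
      Y.card ≤ 5 * m * X.card → ∃ x ∈ X, ∃ z ∈ T, G.Adj x z ∧ z ∉ Y := by
    intro X' hX'T hX'ne hX'c Y' hY'c
    by_contra! hcon
    have hnb : ∀ x ∈ X', T.filter (G.Adj x) ⊆ Y' := fun x hx z hz =>
      hcon x hx z (Finset.mem_filter.1 hz).1 (Finset.mem_filter.1 hz).2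
    have hY'ne : Y'.Nonempty := by
      obtain ⟨x, hx⟩ := hX'ne
      have h1 : 0 < (T.filter (G.Adj x)).card := lt_of_lt_of_le hd (hTd x (hX'T hx))
      exact (Finset.card_pos.1 h1).mono (hnb x hx)
    have hlt := hexp X' Y' hX'ne hX'c hY'ne hY'c ((X' ×ˢ Y').filter (fun e => G.Adj e.1 e.2))
      (Finset.filter_subset _ _) (fun e he => (Finset.mem_filter.1 he).2)
    have hmaps : ∀ e ∈ (X' ×ˢ Y').filter (fun e => G.Adj e.1 e.2), e.1 ∈ X' := fun e he =>
      (Finset.mem_product.1 (Finset.mem_filter.1 he).1).1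
    rw [Finset.card_eq_sum_card_fiberwise hmaps] at hlt
    refine absurd hlt (not_lt.2 ?_)
    rw [mul_comm, ← smul_eq_mul]
    refine Finset.card_nsmul_le_sum _ _ _ fun x hx => ?_
    refine (hTd x (hX'T hx)).trans ?_
    refine Finset.card_le_card_of_injOn (fun z => (x, z)) ?_ ?_
    · intro z hz
      have hz' := hnb x hx hz
      have hadj := (Finset.mem_filter.1 hz).2
      simp only [Finset.coe_filter, Finset.mem_filter, Finset.mem_product, Set.mem_ofPred_eq]
      exact ⟨⟨⟨hx, hz'⟩, hadj⟩, trivial⟩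
    · intro a _ b _ h
      exact (Prod.mk.inj h).2
  have h_edge : ∀ A B : Finset (Fin n), Disjoint A B → A.card = m ^ j → B.card = m ^ j →
      ∃ a ∈ A, ∃ b ∈ B, G.Adj a b := by
    intro A B hAB hA hB
    obtain ⟨P', hP', hP'G, hP'c⟩ := hbip (m ^ j) (Or.inl rfl) A B hAB hA hB
    have h1 : (0 : ℝ) < P'.card := lt_of_le_of_lt (by positivity) hP'c
    obtain ⟨e, he⟩ := Finset.card_pos.1 (by exact_mod_cast h1 : 0 < P'.card)
    have := Finset.mem_product.1 (hP' he)
    exact ⟨e.1, this.1, e.2, this.2, hP'G e he⟩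
  obtain ⟨f, hf1, hf2, hf3⟩ := exists_cycle G T m j δ hm hδ hTne h_exp hj h_edge
  exact ⟨fun i => ⟨f i, hTS (hf2 i)⟩, fun a b h => hf1 (congrArg Subtype.val h),
    fun a b h => hf3 a b h⟩

set_option maxHeartbeats 2000000 in
/-- Choice of parameters, with `w = n ^ (1 / 4 j)`: the edge probability is `p = 1 / q` with `q` of
order `√n`, the expansion factor is `m` of order `(q log n) ^ (1 / j)`, the minimum degree is
`d = 160 j m`, and `t₀ = m ^ j`, `t₁ = 2560 j m q`. The bound `s = 2 t₁` has order
`n ^ ((j + 1) / 2 j) (log n) ^ (1 / j)`. -/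
lemma exists_cycle_dense (j : ℕ) (hj : 1 ≤ j) : ∃ (C : ℝ) (N : ℕ), 0 < C ∧ ∀ n : ℕ, n > N →
    ∃ (s : ℕ) (G : SimpleGraph (Fin n)), (∀ a b c, G.Adj a b → G.Adj a c → ¬ G.Adj b c) ∧
      (s : ℝ) ≤ C * (n : ℝ) ^ (((j : ℝ) + 1) / (2 * j)) *
        Real.log n ^ (((j : ℝ) + 1) / (2 * j)) ∧
      ∀ δ ≤ 1, ∀ S : Finset (Fin n), s ≤ S.card →
        ContainsCopy (SimpleGraph.cycleGraph (2 * j + 2 - δ)) (G.induce (S : Set (Fin n))) := by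
  have hj' : (1 : ℝ) ≤ j := by exact_mod_cast hj
  have hj0 : (0 : ℝ) < j := by linarith
  have hev : ∀ᶠ n : ℕ in Filter.atTop,
      2 ^ j * 30 * Real.log n ≤ (n : ℝ) ^ (1 / (4 * (j : ℝ))) := by
    have h1 := (isLittleO_log_rpow_atTop (show 0 < 1 / (4 * (j : ℝ)) by positivity)).bound
      (show (0 : ℝ) < 1 / (2 ^ j * 30) by positivity)
    have h2 := tendsto_natCast_atTop_atTop (R := ℝ) |>.eventually h1
    filter_upwards [h2, Filter.eventually_ge_atTop 1] with n hn hn1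
    have hn1' : (1 : ℝ) ≤ n := by exact_mod_cast hn1
    rw [Real.norm_of_nonneg (Real.log_nonneg hn1'), Real.norm_of_nonneg (by positivity)] at hn
    have h3 : (0 : ℝ) < 2 ^ j * 30 := by positivity
    rw [one_div, inv_mul_eq_div, le_div_iff₀ h3] at hn
    linarith
  obtain ⟨N, hN⟩ := Filter.eventually_atTop.1 hev
  refine ⟨5120 * j * (2 * 600) * 20, N + 3, by positivity, ?_⟩
  intro n hn
  have hw := hN n (by omega)
  have hn3 : (3 : ℝ) ≤ n := by exact_mod_cast (by omega : 3 ≤ n)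
  have hn0 : (0 : ℝ) < n := by linarith
  have hL : 1 ≤ Real.log n := by
    rw [Real.le_log_iff_exp_le (by linarith)]
    linarith [Real.exp_one_lt_d9]
  set L := Real.log n with hLdef
  set w : ℝ := (n : ℝ) ^ (1 / (4 * (j : ℝ))) with hwdef
  have hw0 : 0 < w := by positivity
  set q : ℕ := 10 * ⌈Real.sqrt n⌉₊ with hq
  have hsn1 : 1 ≤ Real.sqrt n := Real.one_le_sqrt.2 (by linarith)
  have hsn : Real.sqrt n * Real.sqrt n = n := Real.mul_self_sqrt hn0.le
  have hq1 : 10 * Real.sqrt n ≤ q := by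
    rw [hq]; push_cast; linarith [Nat.le_ceil (Real.sqrt n)]
  have hq2 : (q : ℝ) ≤ 20 * Real.sqrt n := by
    rw [hq]; push_cast; linarith [Nat.ceil_lt_add_one (Real.sqrt_nonneg n)]
  have hq0 : (0 : ℝ) < q := by linarith
  set z : ℝ := 30 * q * L with hz
  have hz1 : Real.sqrt n ≤ z := by nlinarith
  have hz0 : 0 < z := by linarith
  set y : ℝ := z ^ (1 / (j : ℝ)) with hy
  have hyj : y ^ j = z := by
    rw [hy, ← Real.rpow_natCast, ← Real.rpow_mul hz0.le, one_div,
      inv_mul_cancel₀ hj0.ne', Real.rpow_one]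
  have hy0 : 0 < y := by positivity
  have hwy : w * w ≤ y := by
    have h1 : w * w = Real.sqrt n ^ (1 / (j : ℝ)) := by
      rw [hwdef, ← Real.rpow_add hn0, Real.sqrt_eq_rpow, ← Real.rpow_mul hn0.le]
      congr 1; field_simp; norm_num
    rw [h1, hy]
    exact Real.rpow_le_rpow (Real.sqrt_nonneg _) hz1 (by positivity)
  have h2j : (1 : ℝ) ≤ 2 ^ j := one_le_pow₀ (by norm_num)
  have hw30 : 30 * L ≤ w := by nlinarith
  have hy30 : 30 * L ≤ y := by nlinarith
  set m : ℕ := ⌈y⌉₊ with hm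
  have hm1 : y ≤ m := Nat.le_ceil y
  have hm2 : (m : ℝ) ≤ 2 * y := by
    have := Nat.ceil_lt_add_one hy0.le
    linarith
  have hm3 : 2 ≤ m := by
    have : (2 : ℝ) ≤ m := by linarith
    exact_mod_cast this
  have hwM : w * (m : ℝ) ^ (j - 1) ≤ q := by
    have h1 : (m : ℝ) ^ (j - 1) * y ≤ 2 ^ j * z := by
      calc (m : ℝ) ^ (j - 1) * y ≤ (2 * y) ^ (j - 1) * (2 * y) := by gcongr; linarith
        _ = (2 * y) ^ j := by rw [← pow_succ, Nat.sub_add_cancel hj]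
        _ = 2 ^ j * z := by rw [mul_pow, hyj]
    have h2 : 2 ^ j * z ≤ q * w := by
      calc 2 ^ j * z = q * (2 ^ j * 30 * L) := by rw [hz]; ring
        _ ≤ q * w := by gcongr
    have h3 : w * (m : ℝ) ^ (j - 1) * y ≤ q * y := by
      calc w * (m : ℝ) ^ (j - 1) * y = w * ((m : ℝ) ^ (j - 1) * y) := by ring
        _ ≤ w * (q * w) := mul_le_mul_of_nonneg_left (h1.trans h2) hw0.le
        _ = q * (w * w) := by ring
        _ ≤ q * y := by gcongr
    exact le_of_mul_le_mul_right h3 hy0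
  have hw1 : 1 ≤ w := by linarith
  have hMq : (m : ℝ) ^ (j - 1) ≤ q := by
    refine le_trans ?_ hwM
    have : (0 : ℝ) ≤ (m : ℝ) ^ (j - 1) := by positivity
    nlinarith
  have hexpl : Real.exp (L / (4 * j)) = w := by
    rw [hwdef, Real.rpow_def_of_pos hn0]; congr 1; ring
  set p : ℝ := 1 / q with hp
  have hp0 : 0 ≤ p := by positivity
  have hpq : p * q = 1 := by rw [hp]; field_simp
  -- With `l = log n / (4 j)`, the degree `d = 160 j m` makes `l d = 40 m log n`, and
  -- `exp l = w` is the gain of `q` over `m ^ (j - 1)`.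
  obtain ⟨G, hG1, hG2, hG3⟩ := exists_good_graph n m (160 * j * m) (m ^ (j - 1)) (m ^ j)
    (2560 * j * m * q) p (L / (4 * j)) hp0 (by rw [hp, div_le_one hq0]; linarith) (by omega)
    (by
      rw [hp, div_pow, one_pow, one_div, inv_mul_eq_div, mul_div_assoc',
        div_le_one (by positivity)]
      nlinarith)
    hL (by omega) (by positivity)
    (by
      rw [hexpl, hp]; push_cast
      rw [mul_one_div, div_mul_eq_mul_div, div_le_one hq0]; exact hwM)
    (by
      have : ((m ^ (j - 1) : ℕ) : ℝ) ≤ 20 * n := by push_cast; nlinarith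
      exact_mod_cast this)
    (by push_cast; rw [← hLdef]; apply le_of_eq; field_simp; norm_num)
    (by
      push_cast
      have h1 : z ≤ (m : ℝ) ^ j := by rw [← hyj]; gcongr
      calc 30 * L = p * q * (30 * L) := by rw [hpq, one_mul]
        _ = p * z := by rw [hz]; ring
        _ ≤ p * (m : ℝ) ^ j := by gcongr)
    (by
      push_cast
      calc 30 * L ≤ m := by linarith
        _ = 1 * 1 * m := by ring
        _ ≤ 2560 * j * m := by gcongr; norm_num
        _ = p * q * (2560 * j * m) := by rw [hpq, one_mul]
        _ = p * (2560 * j * m * q) := by ring)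
  refine ⟨2 * (2560 * j * m * q), G, hG1, ?_, ?_⟩
  · push_cast
    have hyb : y ≤ 600 * (Real.sqrt n ^ (1 / (j : ℝ)) * L ^ (1 / (j : ℝ))) := by
      have h1 : z ≤ 600 * (Real.sqrt n * L) := by rw [hz]; nlinarith
      have h2 : y ≤ (600 * (Real.sqrt n * L)) ^ (1 / (j : ℝ)) := by
        rw [hy]; exact Real.rpow_le_rpow hz0.le h1 (by positivity)
      refine h2.trans ?_
      rw [Real.mul_rpow (by norm_num) (by positivity),
        Real.mul_rpow (by positivity) (by positivity)]
      gcongr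
      calc (600 : ℝ) ^ (1 / (j : ℝ)) ≤ 600 ^ (1 : ℝ) :=
            Real.rpow_le_rpow_of_exponent_le (by norm_num) (by
              rw [div_le_one hj0]; exact hj')
        _ = 600 := Real.rpow_one _
    have hexn : Real.sqrt n ^ (1 / (j : ℝ)) * Real.sqrt n =
        (n : ℝ) ^ (((j : ℝ) + 1) / (2 * j)) := by
      rw [Real.sqrt_eq_rpow, ← Real.rpow_mul hn0.le, ← Real.rpow_add hn0]
      congr 1; field_simp; ring
    have hexL : L ^ (1 / (j : ℝ)) ≤ L ^ (((j : ℝ) + 1) / (2 * j)) := by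
      refine Real.rpow_le_rpow_of_exponent_le hL ?_
      rw [div_le_div_iff₀ hj0 (by positivity)]
      nlinarith
    calc (2 : ℝ) * (2560 * j * m * q) = 5120 * j * m * q := by ring
      _ ≤ 5120 * j * (2 * (600 * (Real.sqrt n ^ (1 / (j : ℝ)) * L ^ (1 / (j : ℝ))))) *
          (20 * Real.sqrt n) := by gcongr; linarith
      _ = 5120 * j * (2 * 600) * 20 * (Real.sqrt n ^ (1 / (j : ℝ)) * Real.sqrt n) *
          L ^ (1 / (j : ℝ)) := by ring
      _ ≤ _ := by rw [hexn]; gcongr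
  · intro δ hδ S hS
    refine containsCopy_cycle n m (160 * j * m) j (2560 * j * m * q) δ p G hm3 hδ hj ?_ hp0 hG2
      hG3 ?_ S hS
    · exact Nat.mul_pos (by omega) (by omega)
    -- `t₁` is chosen so that `d * (2 * t₁) = p * t₁ ^ 2 / 8`
    · push_cast
      apply le_of_eq
      rw [hp]; field_simp; norm_num

lemma triangle_free_of_not_containsCopy {V : Type*} (G : SimpleGraph V)
    (h : ¬ ContainsCopy (⊤ : SimpleGraph (Fin 3)) G) :
    ∀ a b c, G.Adj a b → G.Adj a c → ¬ G.Adj b c := by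
  intro a b c hab hac hbc
  apply h
  refine ⟨![a, b, c], ?_, ?_⟩
  · intro i i' hii
    fin_cases i <;> fin_cases i' <;> simp_all
  · intro i i' hii
    fin_cases i <;> fin_cases i' <;> simp_all [G.adj_comm]

lemma not_containsCopy_of_triangle_free {V : Type*} (G : SimpleGraph V)
    (h : ∀ a b c, G.Adj a b → G.Adj a c → ¬ G.Adj b c) :
    ¬ ContainsCopy (⊤ : SimpleGraph (Fin 3)) G := by
  rintro ⟨f, _, hf⟩
  exact h (f 0) (f 1) (f 2) (hf (by simp)) (hf (by simp)) (hf (by simp))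

/-- An independent set contains no cycle, so the independence number is a lower bound. -/
lemma minFIndep_lower (l n : ℕ) (hl : 3 ≤ l) (hn : 1000 ≤ n) :
    1 / 64 * (n : ℝ) ^ ((1 : ℝ) / 2) * Real.log n ^ ((1 : ℝ) / 2) ≤
      minFIndep (SimpleGraph.cycleGraph l) (⊤ : SimpleGraph (Fin 3)) n := by
  have hne : {k | ∃ G : SimpleGraph (Fin n), ¬ ContainsCopy (⊤ : SimpleGraph (Fin 3)) G ∧
      fIndepNum (SimpleGraph.cycleGraph l) G = k}.Nonempty :=
    ⟨_, ⊥, not_containsCopy_of_triangle_free _ (by simp), rfl⟩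
  obtain ⟨G, hG, hGk⟩ := Nat.sInf_mem hne
  obtain ⟨W, hW, hWc⟩ := exists_indep n hn G (triangle_free_of_not_containsCopy G hG)
  refine hWc.trans ?_
  rw [minFIndep, ← hGk, fIndepNum]
  refine Nat.cast_le.2 (le_csSup ⟨n, ?_⟩ ⟨W, rfl, ?_⟩)
  · rintro k ⟨S, rfl, -⟩
    simpa using Finset.card_le_univ S
  · rintro ⟨f, -, hf⟩
    have hadj : (SimpleGraph.cycleGraph l).Adj ⟨1, by omega⟩ ⟨0, by omega⟩ := by
      rw [SimpleGraph.cycleGraph_adj']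
      left
      rw [Fin.sub_def]
      simp only [Nat.sub_zero]
      rw [Nat.add_mod_left, Nat.mod_eq_of_lt (by omega)]
    exact hW _ (f _).2 _ (f _).2 (hf hadj)

lemma minFIndep_upper (l n s : ℕ) (G : SimpleGraph (Fin n))
    (hG : ∀ a b c, G.Adj a b → G.Adj a c → ¬ G.Adj b c)
    (h : ∀ S : Finset (Fin n), s ≤ S.card →
      ContainsCopy (SimpleGraph.cycleGraph l) (G.induce (S : Set (Fin n)))) :
    minFIndep (SimpleGraph.cycleGraph l) (⊤ : SimpleGraph (Fin 3)) n ≤ s := by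
  have h1 : minFIndep (SimpleGraph.cycleGraph l) (⊤ : SimpleGraph (Fin 3)) n ≤
      fIndepNum (SimpleGraph.cycleGraph l) G :=
    Nat.sInf_le ⟨G, not_containsCopy_of_triangle_free G hG, rfl⟩
  refine h1.trans (csSup_le' ?_)
  rintro k ⟨S, rfl, hS⟩
  by_contra! hlt
  exact hS (h S hlt.le)

end

theorem stmt12 (k : ℕ) (hk : 2 ≤ k) :
    ∃ (c C : ℝ) (N : ℕ), 0 < c ∧ 0 < C ∧ ∀ n : ℕ, n > N →
      (c * (n : ℝ) ^ ((1 : ℝ) / 2) * Real.log n ^ ((1 : ℝ) / 2) ≤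
          minFIndep (SimpleGraph.cycleGraph (2 * k)) (⊤ : SimpleGraph (Fin 3)) n ∧
        (minFIndep (SimpleGraph.cycleGraph (2 * k)) (⊤ : SimpleGraph (Fin 3)) n : ℝ) ≤
          C * (n : ℝ) ^ ((k : ℝ) / (2 * k - 2)) * Real.log n ^ ((k : ℝ) / (2 * k - 2))) ∧
      (c * (n : ℝ) ^ ((1 : ℝ) / 2) * Real.log n ^ ((1 : ℝ) / 2) ≤
          minFIndep (SimpleGraph.cycleGraph (2 * k - 1)) (⊤ : SimpleGraph (Fin 3)) n ∧
        (minFIndep (SimpleGraph.cycleGraph (2 * k - 1)) (⊤ : SimpleGraph (Fin 3)) n : ℝ) ≤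
          C * (n : ℝ) ^ ((k : ℝ) / (2 * k - 2)) * Real.log n ^ ((k : ℝ) / (2 * k - 2))) := by
  obtain ⟨j, rfl⟩ : ∃ j, k = j + 1 := ⟨k - 1, by omega⟩
  obtain ⟨C, N, hC, h⟩ := exists_cycle_dense j (by omega)
  refine ⟨1 / 64, C, N + 1000, by norm_num, hC, fun n hn => ?_⟩
  obtain ⟨s, G, hG, hs, hcyc⟩ := h n (by omega)
  have he : ((j + 1 : ℕ) : ℝ) / (2 * ((j + 1 : ℕ) : ℝ) - 2) = ((j : ℝ) + 1) / (2 * j) := by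
    push_cast; congr 1; ring
  rw [he]
  refine ⟨⟨minFIndep_lower _ n (by omega) (by omega), ?_⟩,
    ⟨minFIndep_lower _ n (by omega) (by omega), ?_⟩⟩
  · refine le_trans (Nat.cast_le.2 (minFIndep_upper _ n s G hG ?_)) hs
    exact fun S hS => hcyc 0 (by omega) S hS
  · refine le_trans (Nat.cast_le.2 (minFIndep_upper _ n s G hG ?_)) hs
    exact fun S hS => hcyc 1 le_rfl S hS
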